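/- Let d ≥ 5. There are numbers ρ = ρ(n,d) and c = c(d) > 0 such that if A, B ⊂ Z^d are disjoint, A ∪ B has exactly n elements, dist(A, B) ≥ ρ, x is the lex element of A, and B is a disjoint union B^1 ∪ B^2 with |B^1| ≤ 3 and dist(B^1, B^2) ≥ ρ, then P_x(S_{τ_{A∪B}} ∈ B^1 | τ_{A∪B} < ∞) ≥ c·n^{−d/(d−2) − 1.6}·diam(A∪B)^{2−d}. -/

import Mathlib

open MeasureTheory

namespace HATFormal

/-- Points of the lattice `ℤ^d`. -/
abbrev Pt (d : ℕ) := Fin d → ℤ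

/-- The `2d` unit steps of the simple random walk on `ℤ^d`. -/
def Dir (d : ℕ) : Set (Pt d) :=
  {s | ∃ i : Fin d, s = Pi.single i 1 ∨ s = Pi.single i (-1)}

/-- The position, after `t` steps, of the walk started at `x` with steps `s`. -/
def wpos (d : ℕ) (x : Pt d) {T : ℕ} (s : Fin T → Pt d) (t : ℕ) : Pt d :=
  x + ∑ i ∈ Finset.univ.filter (fun i : Fin T => (i : ℕ) < t), s i

/-- The probability of an event `P` of the first `T` steps of simple random walk on `ℤ^d`. -/
noncomputable def prob (d T : ℕ) (P : (Fin T → Pt d) → Prop) : ℝ :=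
  (Nat.card {s : Fin T → Pt d // (∀ i, s i ∈ Dir d) ∧ P s} : ℝ) / ((2 * d : ℕ) : ℝ) ^ T

open Classical in
/-- `esc d A x = P_x(τ_A = ∞)` if `x ∈ A`, and `0` otherwise. -/
noncomputable def esc (d : ℕ) (A : Set (Pt d)) (x : Pt d) : ℝ :=
  if x ∈ A then ⨅ T : ℕ, prob d T (fun s => ∀ t, 1 ≤ t → t ≤ T → wpos d x s t ∉ A) else 0

/-- The capacity of `A`. -/
noncomputable def capa (d : ℕ) (A : Set (Pt d)) : ℝ := ∑' x : A, esc d A (x : Pt d)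

/-- The harmonic measure `H_A(x) = esc_A(x) / cap_A`. -/
noncomputable def harm (d : ℕ) (A : Set (Pt d)) (x : Pt d) : ℝ := esc d A x / capa d A

/-- `P_x(τ_W < ∞)`. -/
noncomputable def retProb (d : ℕ) (W : Set (Pt d)) (x : Pt d) : ℝ :=
  ∑' t : ℕ, prob d t (fun s => 1 ≤ t ∧ wpos d x s t ∈ W ∧
    ∀ u, 1 ≤ u → u < t → wpos d x s u ∉ W)

/-- `P_x(τ_W < ∞ and S_{τ_W − 1} = y)`. -/
noncomputable def hitFrom (d : ℕ) (W : Set (Pt d)) (x y : Pt d) : ℝ :=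
  ∑' t : ℕ, prob d t (fun s => 1 ≤ t ∧ wpos d x s t ∈ W ∧ wpos d x s (t - 1) = y ∧
    ∀ u, 1 ≤ u → u < t → wpos d x s u ∉ W)

/-- `P_x(τ_W < ∞ and S_{τ_W} ∈ T)`. -/
noncomputable def firstHitIn (d : ℕ) (W T : Set (Pt d)) (x : Pt d) : ℝ :=
  ∑' t : ℕ, prob d t (fun s => 1 ≤ t ∧ wpos d x s t ∈ W ∧ wpos d x s t ∈ T ∧
    ∀ u, 1 ≤ u → u < t → wpos d x s u ∉ W)

/-- `P_x(S_{τ_W − 1} = y ∣ τ_W < ∞)`. -/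
noncomputable def transP (d : ℕ) (W : Set (Pt d)) (x y : Pt d) : ℝ :=
  hitFrom d W x y / retProb d W x

/-- The Green's function of simple random walk on `ℤ^d`. -/
noncomputable def green (d : ℕ) (x : Pt d) : ℝ :=
  ∑' t : ℕ, prob d t (fun s => wpos d x s t = 0)

/-- Configurations: finite subsets of `ℤ^d`. -/
abbrev Conf (d : ℕ) := Finset (Pt d)

/-- `p_U(x, y)`, the probability that HAT activates at `x` and transports to `y`. -/
noncomputable def pHAT (d : ℕ) (U : Conf d) (x y : Pt d) : ℝ :=
  harm d (↑U) x * transP d ((↑U : Set (Pt d)) \ {x}) x y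

open Classical in
/-- The transition probabilities of HAT. -/
noncomputable def hatProb (d : ℕ) (U V : Conf d) : ℝ :=
  if V = U then ∑' z : Pt d, pHAT d U z z
  else ∑' x : Pt d, ∑' y : Pt d,
    if x ∈ U ∧ x ≠ y ∧ V = insert y (U.erase x) then pHAT d U x y else 0

instance (d : ℕ) : MeasurableSpace (Conf d) := ⊤

/-- `μ` is the law of HAT started from `U`. -/
def IsHATLaw (d : ℕ) (U : Conf d) (μ : Measure (ℕ → Conf d)) : Prop :=
  IsProbabilityMeasure μ ∧
  ∀ (t : ℕ) (u : ℕ → Conf d),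
    μ {ω | ∀ s ≤ t, ω s = u s} =
      (if u 0 = U then 1 else 0) *
        ∏ s ∈ Finset.range t, ENNReal.ofReal (hatProb d (u s) (u (s + 1)))

/-- A signed permutation plus translation of `ℤ^d`. -/
def SymImage (d : ℕ) (σ : Equiv.Perm (Fin d)) (ε : Fin d → ℤ) (v : Pt d) (x : Pt d) : Pt d :=
  fun i => v i + ε i * x (σ i)

/-- `SymEq d U V` holds when `V = gU` for a symmetry `g` of `ℤ^d`. -/
def SymEq (d : ℕ) (U V : Conf d) : Prop :=
  ∃ (σ : Equiv.Perm (Fin d)) (ε : Fin d → ℤ) (v : Pt d),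
    (∀ i, ε i = 1 ∨ ε i = -1) ∧ V = U.image (SymImage d σ ε v)

/-- Euclidean distance on `ℤ^d`. -/
noncomputable def dist0 (d : ℕ) (x y : Pt d) : ℝ :=
  Real.sqrt (∑ i, ((x i : ℝ) - (y i : ℝ)) ^ 2)

/-- Euclidean distance between finite subsets of `ℤ^d`. -/
noncomputable def setDist (d : ℕ) (A B : Finset (Pt d)) : ℝ :=
  sInf {r : ℝ | ∃ x ∈ A, ∃ y ∈ B, r = dist0 d x y}

/-- Euclidean diameter of a finite subset of `ℤ^d`. -/
noncomputable def diam0 (d : ℕ) (A : Finset (Pt d)) : ℝ :=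
  sSup {r : ℝ | ∃ x ∈ A, ∃ y ∈ A, r = dist0 d x y}

/-- Lattice (nearest-neighbor) adjacency in `ℤ^d`. -/
def latAdj (d : ℕ) (x y : Pt d) : Prop := (∑ i, (x i - y i).natAbs) = 1

/-- Exterior lattice boundary of a set. -/
def bdry (d : ℕ) (A : Set (Pt d)) : Set (Pt d) := {z | z ∉ A ∧ ∃ w ∈ A, latAdj d z w}

/-- Non-isolated configurations: some exposed element has a lattice neighbor in the set. -/
def NonIso (d : ℕ) (U : Conf d) : Prop :=
  ∃ x ∈ U, 0 < esc d (↑U) x ∧ ∃ y ∈ U, latAdj d x y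

/-- `C` is a clustering (ordered partition into nonempty clusters) of `U`. -/
def IsClusteringOf (d : ℕ) {k : ℕ} (C : Fin k → Finset (Pt d)) (U : Finset (Pt d)) : Prop :=
  (∀ i, (C i).Nonempty) ∧ (∀ i j, i ≠ j → Disjoint (C i) (C j)) ∧
    Finset.univ.biUnion C = U

/-- `C^{≠ i}`, the union of the clusters other than `i`. -/
def others (d : ℕ) {k : ℕ} (C : Fin k → Finset (Pt d)) (i : Fin k) : Finset (Pt d) :=
  Finset.univ.biUnion fun j => if j = i then ∅ else C j

/-- The separation of a clustering. -/
noncomputable def sep (d : ℕ) {k : ℕ} (C : Fin k → Finset (Pt d)) : ℝ :=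
  ⨅ i, setDist d (C i) (others d C i)

/-- `(a, b)` separated dimer-or-trimer (DOT) clusterings. -/
def IsDOT (d : ℕ) {k : ℕ} (C : Fin k → Finset (Pt d)) (a b : ℝ) : Prop :=
  (∀ i, (C i).card = 2 ∨ (C i).card = 3) ∧ a ≤ sep d C ∧
    ∀ i, diam0 d (C i) ≤ b * Real.log (setDist d (C i) (others d C i))

/-- Clusterings with an unspecified number of clusters. -/
abbrev ClusteringS (d : ℕ) := Σ k : ℕ, Fin k → Finset (Pt d)

/-- `π(C)`, the union of the clusters of `C`. -/
def confOf (d : ℕ) (C : ClusteringS d) : Conf d := Finset.univ.biUnion C.2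

/-- `C ∈ 𝒞(U, a, b)`. -/
def InC (d : ℕ) (U : Conf d) (a b : ℝ) (C : ClusteringS d) : Prop :=
  IsClusteringOf d C.2 U ∧ IsDOT d C.2 a b

/-- `U ∈ 𝒰_{d,n}(a, b)`. -/
def InU (d n : ℕ) (a b : ℝ) (U : Conf d) : Prop :=
  U.card = n ∧ ∃ C : ClusteringS d, InC d U a b C

/-- `C` is a clustering of an `n`-element configuration. -/
def IsClusteringConf (d n : ℕ) (C : ClusteringS d) : Prop :=
  (∀ i, (C.2 i).Nonempty) ∧ (∀ i j, i ≠ j → Disjoint (C.2 i) (C.2 j)) ∧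
    (confOf d C).card = n

open Classical in
/-- One step of the natural clustering. -/
noncomputable def clustStep (d : ℕ) (Ut Ut1 : Conf d) (C : ClusteringS d) : ClusteringS d :=
  if Ut1 = Ut then C
  else if h : ∃ p : Pt d × Pt d × Fin C.1,
      Ut \ Ut1 = {p.1} ∧ Ut1 \ Ut = {p.2.1} ∧ p.1 ∈ C.2 p.2.2 then
    ⟨C.1, Function.update C.2 h.choose.2.2
      (insert h.choose.2.1 ((C.2 h.choose.2.2).erase h.choose.1))⟩
  else ⟨1, fun _ => Ut1⟩

/-- The natural clustering of the trajectory `ω` with initial clustering `C0`. -/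
noncomputable def natClust (d : ℕ) (ω : ℕ → Conf d) (C0 : ClusteringS d) : ℕ → ClusteringS d
  | 0 => C0
  | t + 1 => clustStep d (ω t) (ω (t + 1)) (natClust d ω C0 t)

/-- `a_s = s^{1/2 − n^{−100}} + 100 n`. -/
noncomputable def aSep (n s : ℕ) : ℝ :=
  (s : ℝ) ^ ((1 : ℝ) / 2 - (n : ℝ) ^ (-(100 : ℝ))) + 100 * n

/-- `C^{i, x, y}`: remove `x` from cluster `i` of `C` and add `y` to that cluster. -/
def updC (d : ℕ) (C : ClusteringS d) (i : Fin C.1) (x y : Pt d) : ClusteringS d :=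
  ⟨C.1, Function.update C.2 i (insert y ((C.2 i).erase x))⟩

open Classical in
/-- The transition probabilities of the lifting of HAT to clusterings. -/
noncomputable def liftProb (d : ℕ) (E0 E1 : ClusteringS d) : ℝ :=
  ∑' x : Pt d, ∑' y : Pt d,
    if ∃ i : Fin E0.1, x ∈ E0.2 i ∧ E1 = updC d E0 i x y
    then pHAT d (confOf d E0) x y else 0

/-- The capacity of a clustering: the sum of the capacities of its clusters. -/
noncomputable def capS (d : ℕ) (C : ClusteringS d) : ℝ := ∑ i, capa d (↑(C.2 i))

/-- `H_C(i, x) = esc_{C^i}(x) / cap_C`. -/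
noncomputable def harmS (d : ℕ) (C : ClusteringS d) (i : Fin C.1) (x : Pt d) : ℝ :=
  esc d (↑(C.2 i)) x / capS d C

/-- `q_C(i, x, y)`. -/
noncomputable def qIHAT (d : ℕ) (C : ClusteringS d) (i : Fin C.1) (x y : Pt d) : ℝ :=
  harmS d C i x * transP d ((↑(C.2 i) : Set (Pt d)) \ {x}) x y

open Classical in
/-- The transition probabilities of intracluster HAT (IHAT). -/
noncomputable def ihatProb (d : ℕ) (D E : ClusteringS d) : ℝ :=
  ∑' x : Pt d, ∑' y : Pt d, ∑ i : Fin D.1,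
    if x ∈ D.2 i ∧ E = updC d D i x y then qIHAT d D i x y else 0

instance (d : ℕ) : MeasurableSpace (ClusteringS d) := ⊤

open Classical in
/-- `μ` is the law of the lifted HAT chain started from `E0`. -/
def IsLiftLaw (d : ℕ) (E0 : ClusteringS d) (μ : Measure (ℕ → ClusteringS d)) : Prop :=
  IsProbabilityMeasure μ ∧
  ∀ (t : ℕ) (u : ℕ → ClusteringS d),
    μ {ω | ∀ s ≤ t, ω s = u s} =
      (if u 0 = E0 then 1 else 0) *
        ∏ s ∈ Finset.range t, ENNReal.ofReal (liftProb d (u s) (u (s + 1)))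

open Classical in
/-- `μ` is the law of intracluster HAT started from `D0`. -/
def IsIHATLaw (d : ℕ) (D0 : ClusteringS d) (μ : Measure (ℕ → ClusteringS d)) : Prop :=
  IsProbabilityMeasure μ ∧
  ∀ (t : ℕ) (u : ℕ → ClusteringS d),
    μ {ω | ∀ s ≤ t, ω s = u s} =
      (if u 0 = D0 then 1 else 0) *
        ∏ s ∈ Finset.range t, ENNReal.ofReal (ihatProb d (u s) (u (s + 1)))

/-- `Pairs(E0, E1)`. -/
def Pairs (d : ℕ) (E0 E1 : ClusteringS d) : Set (Pt d × Pt d) :=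
  {p | 0 < pHAT d (confOf d E0) p.1 p.2 ∧
    ∃ i : Fin E0.1, p.1 ∈ E0.2 i ∧ E1 = updC d E0 i p.1 p.2}

/-- `Triples(E0, E1)`. -/
def Triples (d : ℕ) (E0 E1 : ClusteringS d) : Set (Fin E0.1 × Pt d × Pt d) :=
  {q | 0 < qIHAT d E0 q.1 q.2.1 q.2.2 ∧ E1 = updC d E0 q.1 q.2.1 q.2.2}

/-- The first standard basis vector of `ℤ^d`. -/
def e1v (d : ℕ) : Pt d := fun i => if (i : ℕ) = 0 then 1 else 0

/-- Reference dimers and trimers. -/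
def Ref (d : ℕ) : Set (Finset (Pt d)) :=
  {A | ∃ x : Pt d, A = {x, x + e1v d} ∨ A = {x, x + e1v d, x + e1v d + e1v d}}

/-- *-adjacency in `ℤ^d`: distinct points differing by at most one in each coordinate. -/
def starAdj (d : ℕ) (x y : Pt d) : Prop := x ≠ y ∧ ∀ i, (x i - y i).natAbs ≤ 1

/-- The *-visible boundary of `A`. -/
def visBdry (d : ℕ) (A : Finset (Pt d)) : Set (Pt d) :=
  {x | (∃ y ∈ A, starAdj d x y) ∧
    ∃ γ : ℕ → Pt d, γ 0 = x ∧ (∀ t, latAdj d (γ t) (γ (t + 1))) ∧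
      (∀ t, γ t ∉ A) ∧ ∀ r : ℝ, ∃ t, r < dist0 d (γ t) 0}

/-- `A` is connected in the nearest-neighbor graph of `ℤ^d`. -/
def LatConnected (d : ℕ) (A : Finset (Pt d)) : Prop :=
  ∀ x ∈ A, ∀ y ∈ A, ∃ (L : ℕ) (γ : ℕ → Pt d), γ 0 = x ∧ γ L = y ∧
    (∀ t < L, latAdj d (γ t) (γ (t + 1))) ∧ ∀ t ≤ L, γ t ∈ A

/-- Strict lexicographic order on `ℤ^d`. -/
def lexLt (d : ℕ) (x y : Pt d) : Prop :=
  ∃ i : Fin d, (∀ j, j < i → x j = y j) ∧ x i < y i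

/-- `x` is the lex (least) element of `A`. -/
def IsLex (d : ℕ) (A : Finset (Pt d)) (x : Pt d) : Prop :=
  x ∈ A ∧ ∀ y ∈ A, y ≠ x → lexLt d x y

/-- squared Euclidean norm -/
noncomputable def sqn (d : ℕ) (z : Pt d) : ℝ := ∑ i, (z i : ℝ) ^ 2

/-- one step average of the walk -/
noncomputable def Pm (d : ℕ) (F : Pt d → ℝ) (z : Pt d) : ℝ :=
  (∑ i : Fin d, (F (z + Pi.single i 1) + F (z + Pi.single i (-1)))) / (2 * d : ℝ)

/-- the step with index `k` -/
def dirv (d : ℕ) (k : Fin d × Bool) : Pt d := Pi.single k.1 (if k.2 then 1 else -1)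

lemma dirv_inj (d : ℕ) : Function.Injective (dirv d) := by
  rintro ⟨i, a⟩ ⟨j, b⟩ h
  have hi := congrFun h i
  simp only [dirv, Pi.single_eq_same] at hi
  by_cases hij : i = j
  · subst hij
    simp only [Pi.single_eq_same] at hi
    cases a <;> cases b <;> simp_all
  · rw [Pi.single_eq_of_ne hij] at hi
    cases a <;> simp_all

lemma dirv_mem (d : ℕ) (k : Fin d × Bool) : dirv d k ∈ Dir d := by
  obtain ⟨i, a⟩ := k
  refine ⟨i, ?_⟩
  cases a <;> simp [dirv]

lemma dir_ex (d : ℕ) (s : Pt d) (h : s ∈ Dir d) : ∃ k, dirv d k = s := by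
  obtain ⟨i, h | h⟩ := h
  · exact ⟨(i, true), by simp [dirv, h]⟩
  · exact ⟨(i, false), by simp [dirv, h]⟩

lemma card_dir (d T : ℕ) (P : (Fin T → Pt d) → Prop) :
    Nat.card {s : Fin T → Pt d // (∀ i, s i ∈ Dir d) ∧ P s} =
      Nat.card {σ : Fin T → Fin d × Bool // P (fun i => dirv d (σ i))} := by
  symm
  refine Nat.card_congr (Equiv.ofBijective
    (fun σ => ⟨fun i => dirv d (σ.1 i), fun i => dirv_mem d _, σ.2⟩) ⟨?_, ?_⟩)
  · rintro ⟨σ, hσ⟩ ⟨τ, hτ⟩ h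
    simp only [Subtype.mk.injEq] at h ⊢
    funext i
    exact dirv_inj d (congrFun h i)
  · rintro ⟨s, hs, hP⟩
    choose σ hσ using fun i => dir_ex d (s i) (hs i)
    have : (fun i => dirv d (σ i)) = s := funext hσ
    refine ⟨⟨σ, by rw [this]; exact hP⟩, ?_⟩
    simp only [Subtype.mk.injEq]
    exact this

lemma card_succ {K : Type} [Finite K] (T : ℕ) (P : (Fin (T + 1) → K) → Prop) :
    Nat.card {σ : Fin (T + 1) → K // P σ} =
      Nat.card (Σ k : K, {σ : Fin T → K // P (Fin.cons k σ)}) := by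
  refine Nat.card_congr
    { toFun := fun σ => ⟨σ.1 0, Fin.tail σ.1, by rw [Fin.cons_self_tail]; exact σ.2⟩
      invFun := fun p => ⟨Fin.cons p.1 p.2.1, p.2.2⟩
      left_inv := fun σ => by simp
      right_inv := fun p => rfl }

lemma prob_succ (d T : ℕ) (P : (Fin (T + 1) → Pt d) → Prop) :
    prob d (T + 1) P = (∑ i : Fin d,
      (prob d T (fun s => P (Fin.cons (Pi.single i 1 : Pt d) s)) +
       prob d T (fun s => P (Fin.cons (Pi.single i (-1) : Pt d) s)))) / (2 * d : ℝ) := by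
  unfold prob
  have key : Nat.card {s : Fin (T+1) → Pt d // (∀ i, s i ∈ Dir d) ∧ P s} =
      ∑ i : Fin d, (Nat.card {s : Fin T → Pt d // (∀ i, s i ∈ Dir d) ∧
          P (Fin.cons (Pi.single i 1 : Pt d) s)} +
        Nat.card {s : Fin T → Pt d // (∀ i, s i ∈ Dir d) ∧
          P (Fin.cons (Pi.single i (-1) : Pt d) s)}) := by
    rw [card_dir, card_succ, Nat.card_sigma, Fintype.sum_prod_type]
    refine Finset.sum_congr rfl fun i _ => ?_
    rw [Fintype.sum_bool, card_dir, card_dir]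
    have h : ∀ (b : Bool) (σ : Fin T → Fin d × Bool),
        (fun j => dirv d ((Fin.cons (i, b) σ : Fin (T+1) → Fin d × Bool) j)) =
        (Fin.cons (Pi.single i (if b then 1 else -1) : Pt d) (fun j => dirv d (σ j)) :
          Fin (T+1) → Pt d) := by
      intro b σ
      funext j
      refine Fin.cases ?_ (fun j => ?_) j
      · simp [dirv]
      · simp
    simp only [h]
    simp
  rw [key]
  push_cast
  rw [Finset.sum_div, Finset.sum_div]
  refine Finset.sum_congr rfl fun i _ => ?_
  rw [pow_succ]
  field_simp

lemma prob_zero (d : ℕ) (P : (Fin 0 → Pt d) → Prop) [Decidable (P Fin.elim0)] :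
    prob d 0 P = if P Fin.elim0 then 1 else 0 := by
  unfold prob
  have h : ∀ s : Fin 0 → Pt d, s = Fin.elim0 := fun s => Subsingleton.elim _ _
  split_ifs with hP
  · have : Nat.card {s : Fin 0 → Pt d // (∀ i, s i ∈ Dir d) ∧ P s} = 1 := by
      rw [Nat.card_eq_one_iff_unique]
      exact ⟨⟨fun a b => Subtype.ext (Subsingleton.elim _ _)⟩, ⟨⟨Fin.elim0, fun i => i.elim0, hP⟩⟩⟩
    rw [this]; simp
  · have : IsEmpty {s : Fin 0 → Pt d // (∀ i, s i ∈ Dir d) ∧ P s} :=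
      ⟨fun s => hP (by rw [← h s.1]; exact s.2.2)⟩
    rw [Nat.card_of_isEmpty]; simp

lemma prob_congr (d T : ℕ) {P Q : (Fin T → Pt d) → Prop} (h : ∀ s, P s ↔ Q s) :
    prob d T P = prob d T Q := by
  have : P = Q := funext fun s => propext (h s)
  rw [this]

lemma prob_nonneg (d T : ℕ) (P : (Fin T → Pt d) → Prop) : 0 ≤ prob d T P := by
  unfold prob; positivity

lemma prob_false (d T : ℕ) (P : (Fin T → Pt d) → Prop) (h : ∀ s, ¬ P s) : prob d T P = 0 := by
  unfold prob
  have : IsEmpty {s : Fin T → Pt d // (∀ i, s i ∈ Dir d) ∧ P s} := ⟨fun s => h _ s.2.2⟩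
  simp

lemma prob_mono (d T : ℕ) {P Q : (Fin T → Pt d) → Prop} (h : ∀ s, P s → Q s) :
    prob d T P ≤ prob d T Q := by
  unfold prob
  gcongr
  rw [card_dir, card_dir]
  exact Nat.card_le_card_of_injective (Subtype.map id (fun σ hσ => h _ hσ))
    (Subtype.map_injective _ Function.injective_id)

lemma wpos_zero (d : ℕ) (x : Pt d) {T : ℕ} (s : Fin T → Pt d) : wpos d x s 0 = x := by
  simp [wpos]

lemma wpos_cons (d : ℕ) (x e : Pt d) {T : ℕ} (s : Fin T → Pt d) (t : ℕ) :
    wpos d x (Fin.cons e s : Fin (T + 1) → Pt d) (t + 1) = wpos d (x + e) s t := by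
  unfold wpos
  rw [Finset.sum_filter, Finset.sum_filter, Fin.sum_univ_succ]
  simp [add_assoc]

/-- probability that the first entrance (time `0` included) to `W` is at time `t`, in `T` -/
noncomputable def Hh (d : ℕ) (W T : Set (Pt d)) (t : ℕ) (z : Pt d) : ℝ :=
  prob d t (fun s => wpos d z s t ∈ W ∧ wpos d z s t ∈ T ∧ ∀ u, u < t → wpos d z s u ∉ W)

lemma Hh_nonneg (d : ℕ) (W T : Set (Pt d)) (t : ℕ) (z : Pt d) : 0 ≤ Hh d W T t z :=
  prob_nonneg _ _ _

open Classical in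
lemma Hh_zero (d : ℕ) (W T : Set (Pt d)) (z : Pt d) :
    Hh d W T 0 z = if z ∈ W ∧ z ∈ T then 1 else 0 := by
  unfold Hh
  rw [prob_zero]
  simp [wpos_zero]

lemma Hh_succ_mem (d : ℕ) (W T : Set (Pt d)) (t : ℕ) (z : Pt d) (hz : z ∈ W) :
    Hh d W T (t + 1) z = 0 := by
  refine prob_false _ _ _ fun s hs => hs.2.2 0 (Nat.succ_pos _) ?_
  rwa [wpos_zero]

lemma Hh_succ (d : ℕ) (W T : Set (Pt d)) (t : ℕ) (z : Pt d) (hz : z ∉ W) :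
    Hh d W T (t + 1) z = Pm d (Hh d W T t) z := by
  unfold Hh Pm
  rw [prob_succ]
  have : ∀ e : Pt d, prob d t (fun s =>
      wpos d z (Fin.cons e s : Fin (t+1) → Pt d) (t + 1) ∈ W ∧
      wpos d z (Fin.cons e s : Fin (t+1) → Pt d) (t + 1) ∈ T ∧
      ∀ u, u < t + 1 → wpos d z (Fin.cons e s : Fin (t+1) → Pt d) u ∉ W) =
      prob d t (fun s => wpos d (z + e) s t ∈ W ∧ wpos d (z + e) s t ∈ T ∧
        ∀ u, u < t → wpos d (z + e) s u ∉ W) := by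
    intro e
    refine prob_congr _ _ fun s => ?_
    rw [wpos_cons]
    refine and_congr_right fun _ => and_congr_right fun _ => ⟨fun h u hu => ?_, fun h u hu => ?_⟩
    · have := h (u + 1) (by omega)
      rwa [wpos_cons] at this
    · cases u with
      | zero => rwa [wpos_zero]
      | succ u => rw [wpos_cons]; exact h u (by omega)
  simp only [this]

lemma first_succ (d : ℕ) (W T : Set (Pt d)) (t : ℕ) (x : Pt d) :
    prob d (t + 1) (fun s => 1 ≤ t + 1 ∧ wpos d x s (t + 1) ∈ W ∧ wpos d x s (t + 1) ∈ T ∧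
      ∀ u, 1 ≤ u → u < t + 1 → wpos d x s u ∉ W) = Pm d (Hh d W T t) x := by
  unfold Hh Pm
  rw [prob_succ]
  have : ∀ e : Pt d, prob d t (fun s => 1 ≤ t + 1 ∧
      wpos d x (Fin.cons e s : Fin (t+1) → Pt d) (t + 1) ∈ W ∧
      wpos d x (Fin.cons e s : Fin (t+1) → Pt d) (t + 1) ∈ T ∧
      ∀ u, 1 ≤ u → u < t + 1 → wpos d x (Fin.cons e s : Fin (t+1) → Pt d) u ∉ W) =
      prob d t (fun s => wpos d (x + e) s t ∈ W ∧ wpos d (x + e) s t ∈ T ∧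
        ∀ u, u < t → wpos d (x + e) s u ∉ W) := by
    intro e
    refine prob_congr _ _ fun s => ?_
    rw [wpos_cons]
    constructor
    · rintro ⟨-, h1, h2, h⟩
      refine ⟨h1, h2, fun u hu => ?_⟩
      have := h (u + 1) (by omega) (by omega)
      rwa [wpos_cons] at this
    · rintro ⟨h1, h2, h⟩
      refine ⟨by omega, h1, h2, fun u hu1 hu => ?_⟩
      obtain ⟨v, rfl⟩ := Nat.exists_eq_succ_of_ne_zero (by omega : u ≠ 0)
      rw [wpos_cons]; exact h v (by omega)
  simp only [this]

lemma Pm_mono (d : ℕ) {F G : Pt d → ℝ} (z : Pt d)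
    (h : ∀ i : Fin d, ∀ e : ℤ, (e = 1 ∨ e = -1) → F (z + Pi.single i e) ≤ G (z + Pi.single i e)) :
    Pm d F z ≤ Pm d G z := by
  unfold Pm
  gcongr with i
  · exact h i 1 (Or.inl rfl)
  · exact h i (-1) (Or.inr rfl)

lemma Pm_const (d : ℕ) (hd : 0 < d) (c : ℝ) (z : Pt d) : Pm d (fun _ => c) z = c := by
  unfold Pm
  have : (d : ℝ) ≠ 0 := by positivity
  simp
  field_simp
  ring

lemma Pm_add (d : ℕ) (F G : Pt d → ℝ) (z : Pt d) :
    Pm d (fun y => F y + G y) z = Pm d F z + Pm d G z := by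
  unfold Pm
  rw [← add_div, ← Finset.sum_add_distrib]
  congr 1
  exact Finset.sum_congr rfl fun i _ => by ring

lemma Pm_mul (d : ℕ) (c : ℝ) (F : Pt d → ℝ) (z : Pt d) :
    Pm d (fun y => c * F y) z = c * Pm d F z := by
  unfold Pm
  rw [← mul_div_assoc, Finset.mul_sum]
  congr 1
  exact Finset.sum_congr rfl fun i _ => by ring

lemma Pm_sub (d : ℕ) (F G : Pt d → ℝ) (z : Pt d) :
    Pm d (fun y => F y - G y) z = Pm d F z - Pm d G z := by
  unfold Pm
  rw [← sub_div, ← Finset.sum_sub_distrib]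
  congr 1
  exact Finset.sum_congr rfl fun i _ => by ring

lemma Pm_sum (d : ℕ) {ι : Type*} (S : Finset ι) (F : ι → Pt d → ℝ) (z : Pt d) :
    Pm d (fun y => ∑ w ∈ S, F w y) z = ∑ w ∈ S, Pm d (F w) z := by
  unfold Pm
  rw [← Finset.sum_div]
  congr 1
  rw [Finset.sum_comm]
  exact Finset.sum_congr rfl fun i _ => by rw [Finset.sum_add_distrib]

lemma Pm_shift (d : ℕ) (F : Pt d → ℝ) (w z : Pt d) :
    Pm d (fun y => F (y - w)) z = Pm d F (z - w) := by
  unfold Pm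
  simp only [add_sub_right_comm]

lemma sum_Hh_le (d : ℕ) (hd : 0 < d) (W T : Set (Pt d)) (N : ℕ) :
    ∀ z, ∑ t ∈ Finset.range N, Hh d W T t z ≤ 1 := by
  induction N with
  | zero => intro z; simp
  | succ N ih =>
    intro z
    rw [Finset.sum_range_succ']
    by_cases hz : z ∈ W
    · simp only [Hh_succ_mem d W T _ z hz, Hh_zero]
      split_ifs <;> simp
    · simp only [Hh_succ d W T _ z hz, Hh_zero, hz, false_and, if_false, add_zero]
      rw [← Pm_sum]
      calc _ ≤ Pm d (fun _ => 1) z := Pm_mono d z fun i e _ => ih _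
        _ = 1 := Pm_const d hd 1 z

lemma Hh_summable (d : ℕ) (hd : 0 < d) (W T : Set (Pt d)) (z : Pt d) :
    Summable (fun t => Hh d W T t z) :=
  summable_of_sum_range_le (fun t => Hh_nonneg d W T t z) fun N => sum_Hh_le d hd W T N z

/-- hitting probability -/
noncomputable def Uu (d : ℕ) (W T : Set (Pt d)) (z : Pt d) : ℝ := ∑' t, Hh d W T t z

lemma Uu_nonneg (d : ℕ) (W T : Set (Pt d)) (z : Pt d) : 0 ≤ Uu d W T z :=
  tsum_nonneg fun t => Hh_nonneg d W T t z

lemma Uu_le_one (d : ℕ) (hd : 0 < d) (W T : Set (Pt d)) (z : Pt d) : Uu d W T z ≤ 1 :=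
  (Hh_summable d hd W T z).tsum_le_of_sum_range_le fun N => sum_Hh_le d hd W T N z

lemma hasSum_Pm (d : ℕ) (hd : 0 < d) (W T : Set (Pt d)) (z : Pt d) :
    HasSum (fun t => Pm d (Hh d W T t) z) (Pm d (Uu d W T) z) := by
  unfold Pm
  refine HasSum.div_const ?_ _
  refine hasSum_sum fun i _ => ?_
  exact (Hh_summable d hd W T _).hasSum.add (Hh_summable d hd W T _).hasSum

lemma Uu_mem (d : ℕ) (hd : 0 < d) (W T : Set (Pt d)) (z : Pt d) (h1 : z ∈ W) (h2 : z ∈ T) :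
    Uu d W T z = 1 := by
  unfold Uu
  rw [(Hh_summable d hd W T z).tsum_eq_zero_add]
  simp [Hh_succ_mem d W T _ z h1, Hh_zero, h1, h2]

lemma Uu_harm (d : ℕ) (hd : 0 < d) (W T : Set (Pt d)) (z : Pt d) (hz : z ∉ W) :
    Uu d W T z = Pm d (Uu d W T) z := by
  conv_lhs => unfold Uu
  rw [(Hh_summable d hd W T z).tsum_eq_zero_add]
  simp only [Hh_succ d W T _ z hz, Hh_zero, hz, false_and, if_false, zero_add]
  exact (hasSum_Pm d hd W T z).tsum_eq

lemma firstHitIn_eq (d : ℕ) (hd : 0 < d) (W T : Set (Pt d)) (x : Pt d) :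
    firstHitIn d W T x = Pm d (Uu d W T) x := by
  unfold firstHitIn
  have h := hasSum_Pm d hd W T x
  refine HasSum.tsum_eq ?_
  rw [← hasSum_nat_add_iff' 1]
  simp only [first_succ]
  simpa [prob_false] using h

lemma retProb_eq (d : ℕ) (W : Set (Pt d)) (x : Pt d) :
    retProb d W x = firstHitIn d W Set.univ x := by
  unfold retProb firstHitIn
  congr 1
  funext t
  exact prob_congr _ _ fun s => by simp

lemma Uu_mono (d : ℕ) (hd : 0 < d) (W T : Set (Pt d)) (z : Pt d) :
    Uu d W T z ≤ Uu d W Set.univ z := by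
  refine (Hh_summable d hd W T z).tsum_le_tsum (fun t => ?_) (Hh_summable d hd W _ z)
  exact prob_mono _ _ fun s hs => ⟨hs.1, trivial, hs.2.2⟩

/-- maximum principle -/
lemma max_princ (d : ℕ) (hd : 0 < d) (W T : Set (Pt d)) (F : Pt d → ℝ)
    (hfin : ∀ ε : ℝ, 0 < ε → {z | ε ≤ F z}.Finite)
    (hT : ∀ z ∈ W, z ∈ T → F z ≤ 1) (hW : ∀ z ∈ W, z ∉ T → F z ≤ 0)
    (hsub : ∀ z, z ∉ W → F z ≤ Pm d F z) (z : Pt d) : F z ≤ Uu d W T z := by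
  by_contra! hcon
  set K : Pt d → ℝ := fun y => F y - Uu d W T y with hK
  have hKz : 0 < K z := sub_pos.2 hcon
  have hfinK : ∀ ε : ℝ, 0 < ε → {y | ε ≤ K y}.Finite := fun ε hε =>
    (hfin ε hε).subset fun y (hy : ε ≤ K y) => by
      have := Uu_nonneg d W T y
      simp only [hK, Set.mem_ofPred_eq] at hy ⊢
      linarith
  obtain ⟨m, hm, hmax⟩ := Set.exists_max_image _ K (hfinK (K z) hKz) ⟨z, le_refl (K z)⟩
  have hmax' : ∀ y, K y ≤ K m := fun y => by
    by_cases h : K z ≤ K y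
    · exact hmax y h
    · exact le_trans (not_le.1 h).le hm
  have hmpos : 0 < K m := lt_of_lt_of_le hKz hm
  have hprop : ∀ y, K y = K m → K (y + Pi.single ⟨0, hd⟩ 1) = K m := by
    intro y hy
    have hyW : y ∉ W := by
      intro hyW
      have : K y ≤ 0 := by
        by_cases hyT : y ∈ T
        · have := hT y hyW hyT
          have h2 := Uu_mem d hd W T y hyW hyT
          simp only [hK]; linarith
        · have := hW y hyW hyT
          have h2 := Uu_nonneg d W T y
          simp only [hK]; linarith
      linarith
    have h1 : K y ≤ Pm d K y := by
      rw [hK, Pm_sub, ← Uu_harm d hd W T y hyW]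
      simpa using hsub y hyW
    refine le_antisymm (hmax' _) ?_
    by_contra! hlt
    have h2 : Pm d K y < Pm d (fun _ => K m) y := by
      unfold Pm
      have : (0:ℝ) < 2 * d := by positivity
      refine div_lt_div_of_pos_right ?_ this
      refine Finset.sum_lt_sum (fun i _ => add_le_add (hmax' _) (hmax' _)) ⟨⟨0, hd⟩, Finset.mem_univ _, ?_⟩
      exact add_lt_add_of_lt_of_le hlt (hmax' _)
    rw [Pm_const d hd] at h2
    linarith
  have hall : ∀ k : ℕ, K (m + k • (Pi.single ⟨0, hd⟩ 1 : Pt d)) = K m := by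
    intro k
    induction k with
    | zero => simp
    | succ k ih => rw [succ_nsmul, ← add_assoc]; exact hprop _ ih
  have hinf : (Set.range fun k : ℕ => m + k • (Pi.single ⟨0, hd⟩ 1 : Pt d)).Infinite := by
    refine Set.infinite_range_of_injective fun a b hab => ?_
    have := congrFun hab ⟨0, hd⟩
    simpa using this
  refine hinf ((hfinK (K m) hmpos).subset ?_)
  rintro _ ⟨k, rfl⟩
  exact (hall k).ge


lemma conv0 (k k1 k2 : ℝ → ℝ) (b : ℝ) (h1 : ∀ t, 0 ≤ t → t ≤ b → HasDerivAt k (k1 t) t)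
    (h2 : ∀ t, 0 ≤ t → t ≤ b → HasDerivAt k1 (k2 t) t) (hk : k 0 = 0) (hk1 : k1 0 = 0)
    (hk2 : ∀ t, 0 ≤ t → t ≤ b → 0 ≤ k2 t) (y : ℝ) (hy0 : 0 ≤ y) (hyb : y ≤ b) : 0 ≤ k y := by
  have mono : ∀ f f1 : ℝ → ℝ, (∀ t, 0 ≤ t → t ≤ b → HasDerivAt f (f1 t) t) →
      (∀ t, 0 ≤ t → t ≤ b → 0 ≤ f1 t) → f 0 = 0 → ∀ t, 0 ≤ t → t ≤ b → 0 ≤ f t := by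
    intro f f1 hf hf1 hf0 t ht0 htb
    have hm : MonotoneOn f (Set.Icc 0 b) := by
      refine monotoneOn_of_hasDerivWithinAt_nonneg (f' := f1) (convex_Icc 0 b)
        (fun s hs => (hf s hs.1 hs.2).continuousAt.continuousWithinAt) (fun s hs => ?_)
        (fun s hs => ?_)
      · have hs' := interior_subset hs
        exact (hf s hs'.1 hs'.2).hasDerivWithinAt
      · have hs' := interior_subset hs
        exact hf1 s hs'.1 hs'.2
    have := hm ⟨le_refl 0, ht0.trans htb⟩ ⟨ht0, htb⟩ ht0
    rwa [hf0] at this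
  exact mono k k1 h1 (mono k1 k2 h2 hk2 hk1) hk y hy0 hyb

/-- symmetrized power -/
noncomputable def ff (q y : ℝ) : ℝ := (1 + y) ^ (-q) + (1 - y) ^ (-q)
/-- its derivative -/
noncomputable def ff1 (q y : ℝ) : ℝ := -q * (1 + y) ^ (-q - 1) + q * (1 - y) ^ (-q - 1)

lemma ff_deriv (q y : ℝ) (h0 : 0 ≤ y) (h1 : y < 1) : HasDerivAt (ff q) (ff1 q y) y := by
  have a1 : HasDerivAt (fun t : ℝ => (1 + t) ^ (-q)) (1 * (-q) * (1 + y) ^ (-q - 1)) y :=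
    ((hasDerivAt_id y).const_add 1).rpow_const (Or.inl (by simp; linarith))
  have a2 : HasDerivAt (fun t : ℝ => (1 - t) ^ (-q)) (-1 * (-q) * (1 - y) ^ (-q - 1)) y :=
    ((hasDerivAt_id y).const_sub 1).rpow_const (Or.inl (by simp; linarith))
  exact (a1.add a2).congr_deriv (by unfold ff1; ring)

lemma ff1_deriv (q y : ℝ) (h0 : 0 ≤ y) (h1 : y < 1) :
    HasDerivAt (ff1 q) (q * (q + 1) * ff (q + 2) y) y := by
  have a1 : HasDerivAt (fun t : ℝ => (1 + t) ^ (-q - 1)) (1 * (-q - 1) * (1 + y) ^ (-q - 1 - 1)) y :=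
    ((hasDerivAt_id y).const_add 1).rpow_const (Or.inl (by simp; linarith))
  have a2 : HasDerivAt (fun t : ℝ => (1 - t) ^ (-q - 1)) (-1 * (-q - 1) * (1 - y) ^ (-q - 1 - 1)) y :=
    ((hasDerivAt_id y).const_sub 1).rpow_const (Or.inl (by simp; linarith))
  have e : -q - 1 - 1 = -(q + 2) := by ring
  rw [e] at a1 a2
  exact ((a1.const_mul (-q)).add (a2.const_mul q)).congr_deriv (by unfold ff; ring)

lemma poly_deriv (c0 c2 c4 y : ℝ) :
    HasDerivAt (fun t : ℝ => c0 + c2 * t ^ 2 + c4 * t ^ 4) (2 * c2 * y + 4 * c4 * y ^ 3) y := by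
  have a := ((((hasDerivAt_id y).pow 2).const_mul c2).const_add c0).add
    (((hasDerivAt_id y).pow 4).const_mul c4)
  exact a.congr_deriv (by simp; try ring)

lemma poly1_deriv (c2 c4 y : ℝ) :
    HasDerivAt (fun t : ℝ => 2 * c2 * t + 4 * c4 * t ^ 3) (2 * c2 + 12 * c4 * y ^ 2) y := by
  have a := ((hasDerivAt_id y).const_mul (2 * c2)).add
    (((hasDerivAt_id y).pow 3).const_mul (4 * c4))
  exact a.congr_deriv (by simp; try ring)

lemma ff_zero (q : ℝ) : ff q 0 = 2 := by unfold ff; norm_num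

lemma ff1_zero (q : ℝ) : ff1 q 0 = 0 := by unfold ff1; norm_num

lemma ff_ge (q b c2 c4 : ℝ) (hb : b < 1)
    (h : ∀ t, 0 ≤ t → t ≤ b → 2 * c2 + 12 * c4 * t ^ 2 ≤ q * (q + 1) * ff (q + 2) t) (y : ℝ)
    (hy0 : 0 ≤ y) (hyb : y ≤ b) : 2 + c2 * y ^ 2 + c4 * y ^ 4 ≤ ff q y := by
  have := conv0 (fun t => ff q t - (2 + c2 * t ^ 2 + c4 * t ^ 4))
    (fun t => ff1 q t - (2 * c2 * t + 4 * c4 * t ^ 3))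
    (fun t => q * (q + 1) * ff (q + 2) t - (2 * c2 + 12 * c4 * t ^ 2)) b
    (fun t h0 h1 => (ff_deriv q t h0 (by linarith)).sub (poly_deriv 2 c2 c4 t))
    (fun t h0 h1 => (ff1_deriv q t h0 (by linarith)).sub (poly1_deriv c2 c4 t))
    (by simp [ff_zero]) (by simp [ff1_zero]) (fun t h0 h1 => sub_nonneg.2 (h t h0 h1)) y hy0 hyb
  linarith

lemma ff_le (q b c2 c4 : ℝ) (hb : b < 1)
    (h : ∀ t, 0 ≤ t → t ≤ b → q * (q + 1) * ff (q + 2) t ≤ 2 * c2 + 12 * c4 * t ^ 2) (y : ℝ)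
    (hy0 : 0 ≤ y) (hyb : y ≤ b) : ff q y ≤ 2 + c2 * y ^ 2 + c4 * y ^ 4 := by
  have := conv0 (fun t => (2 + c2 * t ^ 2 + c4 * t ^ 4) - ff q t)
    (fun t => (2 * c2 * t + 4 * c4 * t ^ 3) - ff1 q t)
    (fun t => (2 * c2 + 12 * c4 * t ^ 2) - q * (q + 1) * ff (q + 2) t) b
    (fun t h0 h1 => (poly_deriv 2 c2 c4 t).sub (ff_deriv q t h0 (by linarith)))
    (fun t h0 h1 => (poly1_deriv c2 c4 t).sub (ff1_deriv q t h0 (by linarith)))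
    (by simp [ff_zero]) (by simp [ff1_zero]) (fun t h0 h1 => sub_nonneg.2 (h t h0 h1)) y hy0 hyb
  linarith

lemma ff_neg (q y : ℝ) : ff q (-y) = ff q y := by
  unfold ff; rw [sub_neg_eq_add, ← sub_eq_add_neg, add_comm]

lemma ff_abs (q y : ℝ) : ff q |y| = ff q y := by
  rcases abs_choice y with h | h <;> rw [h]
  exact ff_neg q y

lemma ff_nonneg (q y : ℝ) (h0 : 0 ≤ y) (h1 : y < 1) : 0 ≤ ff q y := by
  unfold ff
  have := Real.rpow_nonneg (by linarith : 0 ≤ 1 + y) (-q)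
  have := Real.rpow_nonneg (by linarith : 0 ≤ 1 - y) (-q)
  linarith

lemma ff_two_le (q : ℝ) (hq : 0 ≤ q) (y : ℝ) (h0 : 0 ≤ y) (h1 : y < 1) : 2 ≤ ff q y := by
  have := ff_ge q y 0 0 h1 (fun t ht0 ht1 => by
    have := ff_nonneg (q + 2) t ht0 (by linarith)
    have : 0 ≤ q * (q + 1) * ff (q + 2) t := by positivity
    linarith) y h0 le_rfl
  linarith

lemma sym_low (p : ℝ) (hp : 0 ≤ p) (y : ℝ) (hy : |y| < 1) :
    2 + p * (p + 1) * y ^ 2 ≤ ff p y := by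
  rw [← ff_abs, ← sq_abs]
  have := ff_ge p |y| (p * (p + 1)) 0 hy (fun t ht0 ht1 => by
    have := ff_two_le (p + 2) (by linarith) t ht0 (by linarith)
    have h2 : 0 ≤ p * (p + 1) := by positivity
    nlinarith) |y| (abs_nonneg y) le_rfl
  linarith

lemma ff_bdd (q : ℝ) (hq : 0 ≤ q) (y : ℝ) (h0 : 0 ≤ y) (h1 : y ≤ 1 / 2) :
    ff q y ≤ 1 + (1 / 2 : ℝ) ^ (-q) := by
  unfold ff
  refine add_le_add ?_ ?_
  · exact Real.rpow_le_one_of_one_le_of_nonpos (by linarith) (by linarith)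
  · exact Real.rpow_le_rpow_of_nonpos (by norm_num) (by linarith) (by linarith)

lemma sym_up (p : ℝ) (hp : 0 ≤ p) : ∃ C : ℝ, 0 ≤ C ∧ ∀ y : ℝ, |y| ≤ 1 / 2 →
    ff p y ≤ 2 + p * (p + 1) * y ^ 2 + C * y ^ 4 := by
  set B : ℝ := 1 + (1 / 2 : ℝ) ^ (-(p + 2 + 2)) with hB
  have hB0 : 0 ≤ B := by positivity
  set C1 : ℝ := (p + 2) * (p + 2 + 1) * B / 2 with hC1
  have hC10 : 0 ≤ C1 := by positivity
  have s1 : ∀ y, 0 ≤ y → y ≤ 1 / 2 → ff (p + 2) y ≤ 2 + C1 * y ^ 2 + 0 * y ^ 4 :=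
    ff_le (p + 2) (1 / 2) C1 0 (by norm_num) fun t h0 h1 => by
      have := ff_bdd (p + 2 + 2) (by linarith) t h0 h1
      have h2 : 0 ≤ (p + 2) * (p + 2 + 1) := by positivity
      have := mul_le_mul_of_nonneg_left this h2
      rw [hC1]; linarith
  refine ⟨p * (p + 1) * C1 / 12, by positivity, fun y hy => ?_⟩
  rw [← ff_abs, ← sq_abs, ← (by decide : Even 4).pow_abs y]
  refine ff_le p (1 / 2) _ _ (by norm_num) (fun t h0 h1 => ?_) _ (abs_nonneg y) hy
  have := s1 t h0 h1
  have h2 : 0 ≤ p * (p + 1) := by positivity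
  have := mul_le_mul_of_nonneg_left this h2
  linarith

lemma bern (p : ℝ) (hp : 0 ≤ p) (t : ℝ) (ht : -1 < t) : 1 - p * t ≤ (1 + t) ^ (-p) := by
  rw [Real.rpow_def_of_pos (by linarith)]
  have h1 := Real.log_le_sub_one_of_pos (by linarith : 0 < 1 + t)
  have h2 := Real.add_one_le_exp (Real.log (1 + t) * (-p))
  nlinarith

lemma one_up (p : ℝ) (hp : 0 ≤ p) : ∃ C : ℝ, 0 ≤ C ∧ ∀ t : ℝ, 0 ≤ t → t ≤ 1 / 2 →
    (1 - t) ^ (-p) ≤ 1 + p * t + C * t ^ 2 := by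
  obtain ⟨C, hC, h⟩ := sym_up p hp
  refine ⟨p * (p + 1) + C, by positivity, fun t h0 h1 => ?_⟩
  have a := h t (by rw [abs_of_nonneg h0]; exact h1)
  have b := bern p hp t (by linarith)
  unfold ff at a
  have : C * t ^ 4 ≤ C * t ^ 2 :=
    mul_le_mul_of_nonneg_left (pow_le_pow_of_le_one h0 (by linarith) (by norm_num)) hC
  linarith

lemma sqn_nonneg (d : ℕ) (z : Pt d) : 0 ≤ sqn d z := Finset.sum_nonneg fun i _ => sq_nonneg _

lemma sqn_coord (d : ℕ) (z : Pt d) (i : Fin d) : (z i : ℝ) ^ 2 ≤ sqn d z :=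
  Finset.single_le_sum (f := fun i => (z i : ℝ) ^ 2) (fun i _ => sq_nonneg _) (Finset.mem_univ i)

lemma sqn_add_single (d : ℕ) (z : Pt d) (i : Fin d) (e : ℤ) :
    sqn d (z + Pi.single i e) = sqn d z + 2 * e * z i + e ^ 2 := by
  unfold sqn
  rw [← Finset.add_sum_erase _ _ (Finset.mem_univ i), ← Finset.add_sum_erase (a := i) _ _ (Finset.mem_univ i)]
  have : ∑ j ∈ Finset.univ.erase i, (((z + Pi.single i e : Pt d) j : ℤ) : ℝ) ^ 2 =
      ∑ j ∈ Finset.univ.erase i, (z j : ℝ) ^ 2 := by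
    refine Finset.sum_congr rfl fun j hj => ?_
    simp [Pi.single_eq_of_ne (Finset.ne_of_mem_erase hj)]
  rw [this]
  simp
  ring

lemma Pm_radial (d : ℕ) (g : ℝ → ℝ) (z : Pt d) :
    Pm d (fun y => g (sqn d y)) z =
      (∑ i : Fin d, (g (sqn d z + 1 + 2 * z i) + g (sqn d z + 1 - 2 * z i))) / (2 * d : ℝ) := by
  unfold Pm
  congr 1
  refine Finset.sum_congr rfl fun i _ => ?_
  have e1 := sqn_add_single d z i 1
  have e2 := sqn_add_single d z i (-1)
  have e1' : sqn d (z + Pi.single i 1) = sqn d z + 1 + 2 * z i := by rw [e1]; push_cast; ring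
  have e2' : sqn d (z + Pi.single i (-1)) = sqn d z + 1 - 2 * z i := by rw [e2]; push_cast; ring
  simp only [e1', e2']

lemma rpow_pair (p Q w : ℝ) (hQ : 0 < Q) (h : |2 * w / Q| < 1) :
    (Q + 2 * w) ^ (-p) + (Q - 2 * w) ^ (-p) = Q ^ (-p) * ff p (2 * w / Q) := by
  unfold ff
  have h' := abs_lt.1 h
  rw [mul_add, ← Real.mul_rpow hQ.le (by linarith), ← Real.mul_rpow hQ.le (by linarith)]
  have : Q * (2 * w / Q) = 2 * w := by field_simp
  rw [mul_add, mul_sub, this, mul_one]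

lemma exists_super (d : ℕ) (hd : 3 ≤ d) (p : ℝ) (hp : p = ((d : ℝ) - 2) / 2) :
    ∃ (φ : Pt d → ℝ) (C : ℝ), 0 < C ∧ (∀ z, 0 ≤ φ z) ∧ φ 0 = 1 ∧ (∀ z, Pm d φ z ≤ φ z) ∧
      ∀ z, φ z ≤ C * (1 + sqn d z) ^ (-p) := by
  have hd' : (3 : ℝ) ≤ d := by exact_mod_cast hd
  have hp0 : 0 < p := by rw [hp]; linarith
  have hdp : (d : ℝ) = 2 * (p + 1) := by rw [hp]; ring
  obtain ⟨C, hC, hup⟩ := sym_up p hp0.le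
  set a : ℝ := 4 + 16 * C with ha
  have ha4 : 4 ≤ a := by linarith
  have ha0 : 0 < a := by linarith
  refine ⟨fun z => a ^ p * (sqn d z + a) ^ (-p), a ^ p, by positivity, fun z => ?_, ?_, fun z => ?_,
    fun z => ?_⟩
  · have := sqn_nonneg d z
    positivity
  · simp [sqn]
    rw [← Real.rpow_add ha0]; simp
  · rw [Pm_mul, Pm_radial d (fun r => (r + a) ^ (-p)) z]
    refine mul_le_mul_of_nonneg_left ?_ (by positivity)
    set r := sqn d z with hr
    have hr0 : 0 ≤ r := sqn_nonneg d z
    set Q := r + 1 + a with hQ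
    have hQ0 : 0 < Q := by linarith
    have hyi : ∀ i, |2 * (z i : ℝ) / Q| ≤ 1 / 2 := fun i => by
      rw [abs_div, abs_of_pos hQ0, div_le_iff₀ hQ0]
      have h1 := sqn_coord d z i
      rw [abs_le]
      constructor <;> nlinarith [sq_nonneg ((z i : ℝ) - 2), sq_nonneg ((z i : ℝ) + 2)]
    have hsum2 : ∑ i, (2 * (z i : ℝ) / Q) ^ 2 = 4 * r / Q ^ 2 := by
      rw [hr]; unfold sqn
      rw [Finset.mul_sum, Finset.sum_div]
      exact Finset.sum_congr rfl fun i _ => by ring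
    have hterm : ∀ i, (r + 1 + 2 * (z i : ℝ) + a) ^ (-p) + (r + 1 - 2 * (z i : ℝ) + a) ^ (-p) ≤
        Q ^ (-p) * (2 + (p * (p + 1) + C * (4 / Q)) * (2 * (z i : ℝ) / Q) ^ 2) := fun i => by
      have e1 : r + 1 + 2 * (z i : ℝ) + a = Q + 2 * z i := by rw [hQ]; ring
      have e2 : r + 1 - 2 * (z i : ℝ) + a = Q - 2 * z i := by rw [hQ]; ring
      rw [e1, e2, rpow_pair p Q _ hQ0 (lt_of_le_of_lt (hyi i) (by norm_num))]
      refine mul_le_mul_of_nonneg_left ((hup _ (hyi i)).trans ?_) (by positivity)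
      have h1 := sqn_coord d z i
      have h2 : (2 * (z i : ℝ) / Q) ^ 2 ≤ 4 / Q := by
        rw [div_pow, div_le_div_iff₀ (by positivity) hQ0]
        nlinarith
      have h3 : C * (2 * (z i : ℝ) / Q) ^ 4 ≤ C * (4 / Q) * (2 * (z i : ℝ) / Q) ^ 2 := by
        rw [mul_assoc]
        refine mul_le_mul_of_nonneg_left ?_ hC
        calc (2 * (z i : ℝ) / Q) ^ 4 = (2 * (z i : ℝ) / Q) ^ 2 * (2 * (z i : ℝ) / Q) ^ 2 := by ring
          _ ≤ _ := mul_le_mul_of_nonneg_right h2 (sq_nonneg _)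
      linarith
    rw [div_le_iff₀ (by positivity)]
    calc _ ≤ ∑ i : Fin d, Q ^ (-p) * (2 + (p * (p + 1) + C * (4 / Q)) * (2 * (z i : ℝ) / Q) ^ 2) :=
          Finset.sum_le_sum fun i _ => hterm i
      _ = Q ^ (-p) * (2 * d + (p * (p + 1) + C * (4 / Q)) * (4 * r / Q ^ 2)) := by
          rw [← Finset.mul_sum, Finset.sum_add_distrib, ← Finset.mul_sum, hsum2]
          simp only [Finset.sum_const, Finset.card_univ, Fintype.card_fin, nsmul_eq_mul]
          ring
      _ ≤ Q ^ (-p) * ((1 + p * (1 / Q)) * (2 * d)) := by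
          refine mul_le_mul_of_nonneg_left ?_ (by positivity)
          have h1 : C * (4 / Q) * (4 * r / Q ^ 2) ≤ 16 * C / Q ^ 2 := by
            have : r / Q ≤ 1 := by rw [div_le_one hQ0]; linarith
            calc C * (4 / Q) * (4 * r / Q ^ 2) = (16 * C / Q ^ 2) * (r / Q) := by field_simp; ring
              _ ≤ (16 * C / Q ^ 2) * 1 := mul_le_mul_of_nonneg_left this (by positivity)
              _ = _ := mul_one _
          have h2 : p * (p + 1) * (4 * r / Q ^ 2) + 16 * C / Q ^ 2 ≤ p * (1 / Q) * (2 * d) := by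
            have : p * (p + 1) * (4 * r / Q ^ 2) + 16 * C / Q ^ 2 =
              (4 * p * (p + 1) * r + 16 * C) / Q ^ 2 := by field_simp
            rw [this, div_le_iff₀ (by positivity), hdp]
            have e : p * (1 / Q) * (2 * (2 * (p + 1))) * Q ^ 2 = 4 * p * (p + 1) * Q := by
              field_simp; ring
            rw [e]
            have hpp : 1 ≤ 4 * p * (p + 1) := by
              have : 1 / 2 ≤ p := by rw [hp]; linarith
              nlinarith
            have : 16 * C ≤ 4 * p * (p + 1) * (1 + a) := by nlinarith
            rw [hQ]; linarith
          linarith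
      _ ≤ Q ^ (-p) * ((1 + -(1 / Q)) ^ (-p) * (2 * d)) := by
          have hb := bern p hp0.le (-(1 / Q)) (by
            have : 1 / Q < 1 := by rw [div_lt_one hQ0]; linarith
            linarith)
          have : 1 + p * (1 / Q) ≤ (1 + -(1 / Q)) ^ (-p) := by linarith
          gcongr
      _ = (r + a) ^ (-p) * (2 * d) := by
          rw [← mul_assoc, ← Real.mul_rpow hQ0.le (by
            have : 1 / Q ≤ 1 := by rw [div_le_one hQ0]; linarith
            linarith)]
          congr 2
          field_simp
          rw [hQ]; ring
  · have := sqn_nonneg d z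
    refine mul_le_mul_of_nonneg_left ?_ (by positivity)
    exact Real.rpow_le_rpow_of_nonpos (by linarith) (by linarith) (by linarith)

lemma Pm_single (d : ℕ) (hd : 0 < d) (F : Pt d → ℝ) (hF : ∀ z, 0 ≤ F z) (z : Pt d) (i : Fin d) (e : ℤ)
    (he : e = 1 ∨ e = -1) : F (z + Pi.single i e) / (2 * d) ≤ Pm d F z := by
  unfold Pm
  have hd' : (0 : ℝ) < 2 * d := by positivity
  refine div_le_div_of_nonneg_right ?_ hd'.le
  refine le_trans ?_ (Finset.single_le_sum
    (f := fun i : Fin d => F (z + Pi.single i 1) + F (z + Pi.single i (-1)))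
    (fun j _ => add_nonneg (hF _) (hF _)) (Finset.mem_univ i))
  rcases he with h | h
  · rw [h]; exact le_add_of_nonneg_right (hF _)
  · rw [h]; exact le_add_of_nonneg_left (hF _)

/-- exponential barrier -/
noncomputable def Ee (d : ℕ) (z : Pt d) : ℝ := (2 * d : ℝ) ^ (-sqn d z)

lemma Ee_sub (d : ℕ) (hd : 0 < d) (z : Pt d) (hz : z ≠ 0) : Ee d z ≤ Pm d (Ee d) z := by
  have hd1 : (1 : ℝ) ≤ d := by exact_mod_cast hd
  have h2d : (1 : ℝ) ≤ 2 * d := by linarith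
  obtain ⟨i, hi⟩ : ∃ i, z i ≠ 0 := by
    by_contra! h; exact hz (funext h)
  obtain ⟨e, he, hez⟩ : ∃ e : ℤ, (e = 1 ∨ e = -1) ∧ e * z i ≤ -1 := by
    rcases lt_or_gt_of_ne hi with h | h
    · exact ⟨1, Or.inl rfl, by omega⟩
    · exact ⟨-1, Or.inr rfl, by omega⟩
  have hee : ((e : ℝ)) ^ 2 = 1 := by rcases he with rfl | rfl <;> norm_num
  have hez' : (e : ℝ) * z i ≤ -1 := by exact_mod_cast hez
  refine le_trans ?_ (Pm_single d hd (Ee d) (fun y => by unfold Ee; positivity) z i e he)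
  rw [le_div_iff₀ (by linarith)]
  unfold Ee
  rw [sqn_add_single, hee]
  calc (2 * d : ℝ) ^ (-sqn d z) * (2 * d : ℝ) = (2 * d) ^ (-sqn d z + 1) := by
        rw [Real.rpow_add (by linarith), Real.rpow_one]
    _ ≤ _ := Real.rpow_le_rpow_of_exponent_le h2d (by linarith)

set_option maxHeartbeats 1000000 in
lemma exists_sub (d : ℕ) (hd : 3 ≤ d) (p : ℝ) (hp : p = ((d : ℝ) - 2) / 2) :
    ∃ (φ : Pt d → ℝ) (c : ℝ), 0 < c ∧ (∀ z, φ z ≤ 1) ∧ (∀ z, z ≠ 0 → φ z ≤ Pm d φ z) ∧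
      (∀ z, c * (1 + sqn d z) ^ (-p) ≤ φ z) ∧
      ∀ ε : ℝ, 0 < ε → ∃ R : ℝ, ∀ z, R ≤ sqn d z → φ z ≤ ε := by
  have hd' : (3 : ℝ) ≤ d := by exact_mod_cast hd
  have hp0 : 0 < p := by rw [hp]; linarith
  have hdp : (d : ℝ) = 2 * (p + 1) := by rw [hp]; ring
  obtain ⟨C, hC, hup⟩ := one_up p hp0.le
  set M : ℝ := 1 + C / p with hM
  have hM1 : 1 ≤ M := by have : 0 ≤ C / p := by positivity
                         linarith
  have hMC : p * (M - 1) = C := by rw [hM]; field_simp; ring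
  set R1 : ℝ := 2 * M + 4 with hR1
  set k : ℝ := (2 * d : ℝ) ^ (-R1) with hk
  have hk0 : 0 < k := by positivity
  have h2d : (1 : ℝ) ≤ 2 * d := by linarith
  have hk1 : k ≤ 1 := Real.rpow_le_one_of_one_le_of_nonpos h2d (by linarith)
  let E : Pt d → ℝ := Ee d
  set g : ℝ → ℝ := fun r => k * (max r (M + 1) - M) ^ (-p) with hg
  have hbase : ∀ r, 1 ≤ max r (M + 1) - M := fun r => by
    have := le_max_right r (M + 1); linarith
  have hgk : ∀ r, g r ≤ k := fun r => by
    have := Real.rpow_le_one_of_one_le_of_nonpos (hbase r) (by linarith : -p ≤ 0)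
    simpa [hg] using mul_le_mul_of_nonneg_left this hk0.le
  refine ⟨fun z => max (E z) (g (sqn d z)), k, hk0, fun z => ?_, fun z hz => ?_, fun z => ?_, ?_⟩
  · refine max_le ?_ ((hgk _).trans hk1)
    exact Real.rpow_le_one_of_one_le_of_nonpos h2d (by have := sqn_nonneg d z; linarith)
  · have hEsub : E z ≤ Pm d E z := Ee_sub d (by omega) z hz
    have hEP : E z ≤ Pm d (fun z => max (E z) (g (sqn d z))) z :=
      hEsub.trans (Pm_mono d z fun i e _ => le_max_left _ _)
    refine max_le hEP ?_
    rcases le_total (sqn d z) R1 with hle | hge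
    · refine le_trans ((hgk _).trans ?_) hEP
      exact Real.rpow_le_rpow_of_exponent_le h2d (by linarith)
    · refine le_trans ?_ (Pm_mono d z (F := fun y => g (sqn d y)) fun i e _ => le_max_right _ _)
      rw [Pm_radial d g z]
      set r := sqn d z with hr
      set Q := r - M + 1 with hQ
      have hQ2 : 2 ≤ Q := by linarith
      have hQ0 : 0 < Q := by linarith
      have hyi : ∀ i, |2 * (z i : ℝ)| ≤ r / 2 + 2 := fun i => by
        have h1 := sqn_coord d z i
        rw [abs_le]
        constructor <;> nlinarith [sq_nonneg ((z i : ℝ) - 2), sq_nonneg ((z i : ℝ) + 2)]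
      have hsum2 : ∑ i, (2 * (z i : ℝ) / Q) ^ 2 = 4 * r / Q ^ 2 := by
        rw [hr]; unfold sqn
        rw [Finset.mul_sum, Finset.sum_div]
        exact Finset.sum_congr rfl fun i _ => by ring
      have hterm : ∀ i, k * (Q ^ (-p) * (2 + (p * (p + 1)) * (2 * (z i : ℝ) / Q) ^ 2)) ≤
          g (r + 1 + 2 * (z i : ℝ)) + g (r + 1 - 2 * (z i : ℝ)) := fun i => by
        have h1 := abs_le.1 (hyi i)
        simp only [hg]
        rw [max_eq_left (by linarith), max_eq_left (by linarith), ← mul_add]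
        have e1 : r + 1 + 2 * (z i : ℝ) - M = Q + 2 * z i := by rw [hQ]; ring
        have e2 : r + 1 - 2 * (z i : ℝ) - M = Q - 2 * z i := by rw [hQ]; ring
        have hlt : |2 * (z i : ℝ) / Q| < 1 := by
          rw [abs_div, abs_of_pos hQ0, div_lt_one hQ0]
          refine lt_of_le_of_lt (hyi i) ?_
          linarith
        rw [e1, e2, rpow_pair p Q _ hQ0 hlt]
        have := sym_low p hp0.le _ hlt
        gcongr
      rw [le_div_iff₀ (by linarith)]
      refine le_trans ?_ (Finset.sum_le_sum fun i _ => hterm i)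
      rw [← Finset.mul_sum, ← Finset.mul_sum, Finset.sum_add_distrib, ← Finset.mul_sum, hsum2]
      simp only [hg]
      rw [max_eq_left (by linarith), mul_assoc]
      refine mul_le_mul_of_nonneg_left ?_ hk0.le
      have hQq : r - M = Q * (1 - 1 / Q) := by field_simp; rw [hQ]; ring
      have ht : 1 / Q ≤ 1 / 2 := one_div_le_one_div_of_le (by norm_num) hQ2
      rw [hQq, Real.mul_rpow hQ0.le (by linarith), mul_assoc]
      refine mul_le_mul_of_nonneg_left ?_ (by positivity)
      have hu := hup (1 / Q) (by positivity) ht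
      have h2 : (1 - 1 / Q) ^ (-p) * (2 * (d : ℝ)) ≤ (1 + p * (1 / Q) + C * (1 / Q) ^ 2) * (2 * d) := by
        gcongr
      refine h2.trans ?_
      simp only [Finset.sum_const, Finset.card_univ, Fintype.card_fin, nsmul_eq_mul]
      have e : p * (p + 1) * (4 * r / Q ^ 2) = (p * (1 / Q) + C * (1 / Q) ^ 2) * (2 * d) := by
        rw [hdp, ← hMC]
        field_simp
        rw [hQ]; ring
      rw [e]
      apply le_of_eq; ring
  · refine le_trans ?_ (le_max_right _ _)
    simp only [hg]
    refine mul_le_mul_of_nonneg_left ?_ hk0.le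
    have := hbase (sqn d z)
    have := sqn_nonneg d z
    refine Real.rpow_le_rpow_of_nonpos (by linarith) ?_ (by linarith)
    have : max (sqn d z) (M + 1) ≤ sqn d z + (M + 1) := max_le (by linarith) (by linarith)
    linarith
  · intro ε hε
    have t1 : Filter.Tendsto (fun r : ℝ => (2 * d : ℝ) ^ (-r)) Filter.atTop (nhds 0) :=
      (tendsto_rpow_atBot_of_base_gt_one _ (by linarith)).comp Filter.tendsto_neg_atTop_atBot
    have t2 : Filter.Tendsto (fun r : ℝ => k * (r - M) ^ (-p)) Filter.atTop (nhds 0) := by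
      have := ((tendsto_rpow_neg_atTop hp0).comp
        (Filter.tendsto_atTop_add_const_right Filter.atTop (-M) Filter.tendsto_id)).const_mul k
      simpa [sub_eq_add_neg, Function.comp_def] using this
    have ev := ((t1.eventually_le_const hε).and (t2.eventually_le_const hε)).and
      (Filter.eventually_ge_atTop (M + 1))
    obtain ⟨R, hR⟩ := Filter.eventually_atTop.1 ev
    refine ⟨R, fun z hz => ?_⟩
    obtain ⟨⟨h1, h2⟩, h3⟩ := hR (sqn d z) hz
    refine max_le h1 ?_
    simp only [hg]
    rw [max_eq_left h3]
    exact h2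


/-- Euclidean norm -/
noncomputable def nr (d : ℕ) (z : Pt d) : ℝ := Real.sqrt (sqn d z)

lemma nr_nonneg (d : ℕ) (z : Pt d) : 0 ≤ nr d z := Real.sqrt_nonneg _

lemma nr_sq (d : ℕ) (z : Pt d) : nr d z ^ 2 = sqn d z := Real.sq_sqrt (sqn_nonneg d z)

lemma nr_add (d : ℕ) (x y : Pt d) : nr d (x + y) ≤ nr d x + nr d y := by
  have h : ∀ z : Pt d, nr d z = ‖(WithLp.toLp 2 (fun i => (z i : ℝ)) : EuclideanSpace ℝ (Fin d))‖ := by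
    intro z
    rw [EuclideanSpace.norm_eq]
    unfold nr sqn
    simp
  rw [h, h, h]
  refine le_trans (le_of_eq ?_) (norm_add_le _ _)
  congr 1
  ext i
  simp

lemma nr_neg (d : ℕ) (x : Pt d) : nr d (-x) = nr d x := by
  unfold nr sqn; simp

lemma nr_sub_comm (d : ℕ) (x y : Pt d) : nr d (x - y) = nr d (y - x) := by
  rw [← nr_neg, neg_sub]

lemma nr_tri (d : ℕ) (x y z : Pt d) : nr d (x - z) ≤ nr d (x - y) + nr d (y - z) := by
  have := nr_add d (x - y) (y - z)
  rwa [sub_add_sub_cancel] at this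

lemma dist0_eq (d : ℕ) (x y : Pt d) : dist0 d x y = nr d (x - y) := by
  unfold dist0 nr sqn; simp

lemma nr_single (d : ℕ) (i : Fin d) (e : ℤ) (he : e = 1 ∨ e = -1) :
    nr d (Pi.single i e : Pt d) = 1 := by
  have := sqn_add_single d 0 i e
  rw [zero_add] at this
  unfold nr
  rw [this]
  rcases he with rfl | rfl <;> simp [sqn]

lemma setDist_le (d : ℕ) (A B : Finset (Pt d)) (a b : Pt d) (ha : a ∈ A) (hb : b ∈ B) :
    setDist d A B ≤ nr d (a - b) := by
  refine csInf_le ⟨0, ?_⟩ ⟨a, ha, b, hb, (dist0_eq d a b).symm⟩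
  rintro _ ⟨x, -, y, -, rfl⟩
  exact Real.sqrt_nonneg _

lemma le_diam0 (d : ℕ) (A : Finset (Pt d)) (a b : Pt d) (ha : a ∈ A) (hb : b ∈ A) :
    nr d (a - b) ≤ diam0 d A := by
  refine le_csSup ?_ ⟨a, ha, b, hb, (dist0_eq d a b).symm⟩
  refine Set.Finite.bddAbove ((Finset.finite_toSet ((A ×ˢ A).image fun q => dist0 d q.1 q.2)).subset ?_)
  rintro _ ⟨x, hx, y, hy, rfl⟩
  simp only [Finset.coe_image, Set.mem_image, Finset.mem_coe]
  exact ⟨(x, y), Finset.mem_product.2 ⟨hx, hy⟩, rfl⟩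

lemma setDist_ne (d : ℕ) (A B : Finset (Pt d)) (h : 0 < setDist d A B) : A.Nonempty ∧ B.Nonempty := by
  by_contra hcon
  have : {r : ℝ | ∃ x ∈ A, ∃ y ∈ B, r = dist0 d x y} = ∅ := by
    rw [Set.eq_empty_iff_forall_notMem]
    rintro _ ⟨x, hx, y, hy, rfl⟩
    exact hcon ⟨⟨x, hx⟩, ⟨y, hy⟩⟩
  unfold setDist at h
  rw [this, Real.sInf_empty] at h
  exact lt_irrefl _ h

lemma fin_ball (d : ℕ) (x : Pt d) (K : ℝ) : {z : Pt d | sqn d (z - x) ≤ K}.Finite := by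
  refine (Set.finite_Icc (fun i => x i - (⌈|K|⌉₊ + 1 : ℕ)) (fun i => x i + (⌈|K|⌉₊ + 1 : ℕ))).subset ?_
  intro z (hz : sqn d (z - x) ≤ K)
  have hi : ∀ i, |z i - x i| ≤ (⌈|K|⌉₊ + 1 : ℕ) := fun i => by
    have h1 := (sqn_coord d (z - x) i).trans hz
    have h2 : K ≤ ((⌈|K|⌉₊ : ℕ) : ℝ) := (le_abs_self K).trans (Nat.le_ceil _)
    have h3 : (((z i - x i) ^ 2 : ℤ) : ℝ) ≤ ((⌈|K|⌉₊ : ℤ) : ℝ) := by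
      have := h1.trans h2
      simpa using this
    have h4 : (z i - x i) ^ 2 ≤ (⌈|K|⌉₊ : ℤ) := by exact_mod_cast h3
    push_cast
    rw [abs_le]
    constructor <;> nlinarith
  constructor
  · intro i; have := abs_le.1 (hi i); simp only; omega
  · intro i; have := abs_le.1 (hi i); simp only; omega

/-- harmonic quadratic -/
noncomputable def Qq (d : ℕ) (i0 : Fin d) (h : ℝ) (x z : Pt d) : ℝ :=
  ((x i0 : ℝ) - z i0) + (1 / h) * (d * ((x i0 : ℝ) - z i0) ^ 2 - sqn d (z - x))

lemma Qq_harm (d : ℕ) (i0 : Fin d) (h : ℝ) (x z : Pt d) :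
    Pm d (Qq d i0 h x) z = Qq d i0 h x z := by
  have hd : 0 < d := i0.pos
  have hd' : (d : ℝ) ≠ 0 := by positivity
  have key : ∀ i : Fin d, Qq d i0 h x (z + Pi.single i 1) + Qq d i0 h x (z + Pi.single i (-1)) =
      2 * Qq d i0 h x z + (1 / h) * (if i = i0 then 2 * (d : ℝ) else 0) - (1 / h) * 2 := by
    intro i
    unfold Qq
    rw [add_sub_right_comm, add_sub_right_comm, sqn_add_single, sqn_add_single]
    by_cases hi : i = i0
    · subst hi
      simp; ring
    · have hi' : i0 ≠ i := fun h => hi h.symm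
      simp [Pi.single_eq_of_ne hi', hi]; ring
  unfold Pm
  rw [Finset.sum_congr rfl fun i _ => key i]
  rw [Finset.sum_sub_distrib, Finset.sum_add_distrib, ← Finset.mul_sum, ← Finset.mul_sum, Finset.sum_ite_eq']
  simp
  field_simp
  ring

lemma exists_s (d : ℕ) (i0 : Fin d) (φ : Pt d → ℝ) (hφ0 : ∀ z, 0 ≤ φ z) (hφ1 : φ 0 = 1)
    (hφs : ∀ z, Pm d φ z ≤ φ z) (A B : Finset (Pt d)) (x : Pt d) (h : ℕ) (hh : 1 ≤ h)
    (hA : ∀ a ∈ A, x i0 ≤ a i0) (hB : ∀ b ∈ B, ((d : ℝ) + 2) * h ≤ nr d (x - b))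
    (hφ : ∀ z, (∀ w ∈ A ∪ B, (h : ℝ) ≤ nr d (z - w)) → ∑ w ∈ A ∪ B, φ (z - w) ≤ 1 / 2) :
    ∃ s : Pt d → ℝ, (∀ z, s z ≤ 1) ∧ (∀ w ∈ A ∪ B, s w ≤ 0) ∧ (∀ z, s z ≤ Pm d s z) ∧
      1 / (2 * ((d : ℝ) + 1) * h) ≤ s (x + Pi.single i0 (-1)) := by
  classical
  have hd : 0 < d := i0.pos
  have hd1 : (1 : ℝ) ≤ d := by exact_mod_cast hd
  have hh' : (1 : ℝ) ≤ h := by exact_mod_cast hh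
  set κ : ℝ := 1 / (2 * ((d : ℝ) + 1) * h) with hκ
  have hκ0 : 0 < κ := by positivity
  let e : Pt d → ℝ := fun z => 1 - ∑ w ∈ A ∪ B, φ (z - w)
  have he1 : ∀ z, e z ≤ 1 := fun z => by
    have : 0 ≤ ∑ w ∈ A ∪ B, φ (z - w) := Finset.sum_nonneg fun w _ => hφ0 _
    simp only [e]; linarith
  have heW : ∀ w ∈ A ∪ B, e w ≤ 0 := fun w hw => by
    have : φ (w - w) ≤ ∑ v ∈ A ∪ B, φ (w - v) :=
      Finset.single_le_sum (f := fun v => φ (w - v)) (fun v _ => hφ0 _) hw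
    rw [sub_self, hφ1] at this
    simp only [e]; linarith
  have hesub : ∀ z, e z ≤ Pm d e z := fun z => by
    simp only [e]
    rw [Pm_sub, Pm_const d hd, Pm_sum]
    have : ∑ w ∈ A ∪ B, Pm d (fun y => φ (y - w)) z ≤ ∑ w ∈ A ∪ B, φ (z - w) :=
      Finset.sum_le_sum fun w _ => by rw [Pm_shift]; exact hφs _
    linarith
  let slab : Pt d → Prop := fun z => 0 ≤ x i0 - z i0 ∧ x i0 - z i0 ≤ h
  let Q : Pt d → ℝ := Qq d i0 h x
  have hQle : ∀ z, slab z → Q z ≤ ((d : ℝ) + 1) * h := fun z hz => by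
    have h0 : (0 : ℝ) ≤ (x i0 : ℝ) - z i0 := by exact_mod_cast hz.1
    have h1 : (x i0 : ℝ) - z i0 ≤ h := by exact_mod_cast hz.2
    have h2 := sqn_nonneg d (z - x)
    simp only [Q, Qq]
    have : (1 / (h : ℝ)) * (d * ((x i0 : ℝ) - z i0) ^ 2 - sqn d (z - x)) ≤ (1 / (h : ℝ)) * (d * (h : ℝ) ^ 2) := by
      refine mul_le_mul_of_nonneg_left ?_ (by positivity)
      have : ((x i0 : ℝ) - z i0) ^ 2 ≤ (h : ℝ) ^ 2 := pow_le_pow_left₀ h0 h1 2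
      have := mul_le_mul_of_nonneg_left this (by linarith : (0 : ℝ) ≤ d)
      linarith
    have e : (1 / (h : ℝ)) * (d * (h : ℝ) ^ 2) = d * h := by field_simp
    linarith
  have hQnear : ∀ z, slab z → 0 < Q z → nr d (z - x) ≤ ((d : ℝ) + 1) * h := fun z hz hQ => by
    have h0 : (0 : ℝ) ≤ (x i0 : ℝ) - z i0 := by exact_mod_cast hz.1
    have h1 : (x i0 : ℝ) - z i0 ≤ h := by exact_mod_cast hz.2
    refine abs_le_of_sq_le_sq' ?_ (by positivity) |>.2
    rw [nr_sq]
    simp only [Q, Qq] at hQ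
    have h3 : 0 < h * (((x i0 : ℝ) - z i0) + (1 / h) * (d * ((x i0 : ℝ) - z i0) ^ 2 - sqn d (z - x))) := by
      positivity
    have h4 : h * (((x i0 : ℝ) - z i0) + (1 / h) * (d * ((x i0 : ℝ) - z i0) ^ 2 - sqn d (z - x))) =
      h * ((x i0 : ℝ) - z i0) + (d * ((x i0 : ℝ) - z i0) ^ 2 - sqn d (z - x)) := by
      field_simp
    rw [h4] at h3
    have h5 : ((x i0 : ℝ) - z i0) ^ 2 ≤ (h : ℝ) ^ 2 := pow_le_pow_left₀ h0 h1 2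
    have h6 := mul_le_mul_of_nonneg_left h5 (by linarith : (0 : ℝ) ≤ d)
    have h7 := mul_le_mul_of_nonneg_left h1 (by linarith : (0 : ℝ) ≤ h)
    have h8 : ((d : ℝ) + 1) * h ^ 2 ≤ (((d : ℝ) + 1) * h) ^ 2 := by
      rw [mul_pow]
      exact mul_le_mul_of_nonneg_right (by nlinarith) (by positivity)
    nlinarith
  have hfarB : ∀ z, slab z → 0 < Q z → ∀ b ∈ B, (h : ℝ) ≤ nr d (z - b) := fun z hz hQ b hb => by
    have h1 := hQnear z hz hQ
    have h2 := hB b hb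
    have h3 := nr_tri d x z b
    rw [nr_sub_comm d x z] at h3
    linarith
  have hQ0 : ∀ z, x i0 - z i0 = 0 → Q z ≤ 0 := fun z hz => by
    have h0 : (x i0 : ℝ) - z i0 = 0 := by exact_mod_cast hz
    simp only [Q, Qq, h0]
    have := sqn_nonneg d (z - x)
    have : 0 ≤ (1 / (h : ℝ)) * sqn d (z - x) := by positivity
    simp only [ne_eq, OfNat.ofNat_ne_zero, not_false_eq_true, zero_pow, mul_zero, zero_sub, zero_add]
    linarith
  let s : Pt d → ℝ := fun z => max (max (e z) 0) (if slab z then κ * Q z else 0)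
  have hse : ∀ z, max (e z) 0 ≤ s z := fun z => le_max_left _ _
  have hκQ : ∀ z, slab z → κ * Q z ≤ 1 / 2 := fun z hz => by
    have := mul_le_mul_of_nonneg_left (hQle z hz) hκ0.le
    have e : κ * (((d : ℝ) + 1) * h) = 1 / 2 := by rw [hκ]; field_simp
    linarith
  refine ⟨s, fun z => ?_, fun w hw => ?_, fun z => ?_, ?_⟩
  · refine max_le (max_le (he1 z) zero_le_one) ?_
    split_ifs with hz
    · have := hκQ z hz; linarith
    · exact zero_le_one
  · refine max_le (max_le (heW w hw) le_rfl) ?_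
    split_ifs with hz
    · by_contra! hpos
      have hQ : 0 < Q w := pos_of_mul_pos_right hpos hκ0.le
      rcases Finset.mem_union.1 hw with ha | hb
      · have := hA w ha
        have := hQ0 w (by have := hz.1; omega)
        linarith
      · have := hfarB w hz hQ w hb
        rw [sub_self] at this
        simp [nr, sqn] at this
        linarith
    · exact le_rfl
  · have hbase : max (e z) 0 ≤ Pm d s z := by
      refine max_le ?_ ?_
      · exact (hesub z).trans (Pm_mono d z fun i ε _ => (le_max_left _ _).trans (hse _))
      · calc (0 : ℝ) = Pm d (fun _ => 0) z := (Pm_const d hd 0 z).symm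
          _ ≤ _ := Pm_mono d z fun i ε _ => (le_max_right _ _).trans (hse _)
    refine max_le hbase ?_
    split_ifs with hz
    · by_cases hQ : 0 < Q z
      · by_cases htop : x i0 - z i0 = h
        · refine le_trans (hκQ z hz) (le_trans (le_trans ?_ (le_max_left _ _)) hbase)
          have := hφ z (fun w hw => by
            rcases Finset.mem_union.1 hw with ha | hb
            · have h1 := hA w ha
              have h2 : (h : ℝ) ≤ ((w - z) i0 : ℤ) := by
                have : (h : ℤ) ≤ (w - z) i0 := by simp only [Pi.sub_apply]; omega
                exact_mod_cast this
              have h3 := sqn_coord d (w - z) i0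
              rw [nr_sub_comm]
              refine Real.le_sqrt_of_sq_le (le_trans ?_ h3)
              exact pow_le_pow_left₀ (by linarith) h2 2
            · exact hfarB z hz hQ w hb)
          simp only [e]; linarith
        · have hne : x i0 - z i0 ≠ 0 := fun h0 => by have := hQ0 z h0; linarith
          calc κ * Q z = Pm d (fun y => κ * Q y) z := by rw [Pm_mul, Qq_harm]
            _ ≤ _ := Pm_mono d z fun i ε hε => by
              have hs : slab (z + Pi.single i ε) := by
                have h1 := hz.1
                have h2 := hz.2
                simp only [slab, Pi.add_apply]
                by_cases hi : i0 = i
                · subst hi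
                  rw [Pi.single_eq_same]
                  omega
                · rw [Pi.single_eq_of_ne hi]; omega
              have : (if slab (z + Pi.single i ε) then κ * Q (z + Pi.single i ε) else 0) ≤
                s (z + Pi.single i ε) := le_max_right _ _
              rwa [if_pos hs] at this
      · refine le_trans ?_ ((le_max_right _ _).trans hbase)
        exact mul_nonpos_of_nonneg_of_nonpos hκ0.le (not_lt.1 hQ)
    · exact (le_max_right _ _).trans hbase
  · have hs : slab (x + Pi.single i0 (-1)) := by
      simp only [slab, Pi.add_apply, Pi.single_eq_same]; omega
    have h1 : κ * Q (x + Pi.single i0 (-1)) ≤ s (x + Pi.single i0 (-1)) := by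
      have : (if slab (x + Pi.single i0 (-1)) then κ * Q (x + Pi.single i0 (-1)) else 0) ≤
                s (x + Pi.single i0 (-1)) := le_max_right _ _
      rwa [if_pos hs] at this
    refine le_trans ?_ h1
    have hQ1 : 1 ≤ Q (x + Pi.single i0 (-1)) := by
      simp only [Q, Qq]
      have : sqn d (x + Pi.single i0 (-1) - x) = 1 := by
        rw [add_sub_cancel_left, ← nr_sq, nr_single d i0 (-1) (Or.inr rfl)]; norm_num
      rw [this]
      simp only [Pi.add_apply, Pi.single_eq_same]
      push_cast
      have e : (x i0 : ℝ) - (x i0 + -1) = 1 := by ring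
      rw [e]
      have : 0 ≤ (1 / (h : ℝ)) * (d * 1 ^ 2 - 1) := mul_nonneg (by positivity) (by linarith)
      linarith
    calc κ = κ * 1 := (mul_one _).symm
      _ ≤ _ := mul_le_mul_of_nonneg_left hQ1 hκ0.le



/-- gluing of the far and near barriers -/
lemma glue (d : ℕ) (hd : 0 < d) (W T : Set (Pt d)) (x b : Pt d) (hbW : b ∈ W) (v s : Pt d → ℝ)
    (η r : ℝ) (hη : 0 ≤ η) (hη1 : η ≤ 1) (hr : 0 ≤ r)
    (hv1 : ∀ z, v z ≤ 1) (hv0 : ∀ z ∈ W, z ∉ T → v z ≤ 0)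
    (hvs : ∀ z, z ≠ b → v z ≤ Pm d v z)
    (hvd : ∀ ε : ℝ, 0 < ε → ∃ R : ℝ, ∀ z, R ≤ sqn d (z - b) → v z ≤ ε)
    (hvη : ∀ z, r ≤ nr d (z - x) → nr d (z - x) ≤ r + 1 → η ≤ v z)
    (hs1 : ∀ z, s z ≤ 1) (hs0 : ∀ w ∈ W, s w ≤ 0) (hss : ∀ z, s z ≤ Pm d s z)
    (y : Pt d) (hy : nr d (y - x) ≤ r + 1) : η * s y ≤ Uu d W T y := by
  classical
  set F : Pt d → ℝ := fun z => if nr d (z - x) ≤ r + 1 then max (v z) (η * s z) else v z with hF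
  have hvF : ∀ z, v z ≤ F z := fun z => by
    simp only [hF]; split_ifs
    · exact le_max_left _ _
    · exact le_rfl
  have hsF : ∀ z, nr d (z - x) ≤ r + 1 → η * s z ≤ F z := fun z hz => by
    simp only [hF]; rw [if_pos hz]; exact le_max_right _ _
  have hFv : ∀ z, F z ≤ v z ∨ (nr d (z - x) ≤ r + 1 ∧ F z = η * s z ∧ v z < η * s z) := fun z => by
    by_cases hz : nr d (z - x) ≤ r + 1
    · simp only [hF]; rw [if_pos hz]
      rcases le_or_gt (η * s z) (v z) with h | h
      · left; rw [max_eq_left h]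
      · right; exact ⟨hz, max_eq_right h.le, h⟩
    · left; simp only [hF]; rw [if_neg hz]
  refine (hsF y hy).trans (max_princ d hd W T F ?_ ?_ ?_ ?_ y)
  · intro ε hε
    obtain ⟨R, hR⟩ := hvd (ε / 2) (by linarith)
    refine ((fin_ball d x ((r + 1) ^ 2)).union (fin_ball d b R)).subset ?_
    intro z (hz : ε ≤ F z)
    rcases hFv z with h | ⟨h, -⟩
    · right
      by_contra hcon
      have := hR z (not_le.1 hcon).le
      linarith
    · left
      show sqn d (z - x) ≤ _
      rw [← nr_sq]
      exact pow_le_pow_left₀ (nr_nonneg _ _) h 2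
  · intro z _ _
    rcases hFv z with h | ⟨-, h, -⟩
    · exact h.trans (hv1 z)
    · rw [h]; nlinarith [hs1 z]
  · intro z hz hzT
    rcases hFv z with h | ⟨-, h, -⟩
    · exact h.trans (hv0 z hz hzT)
    · rw [h]; exact mul_nonpos_of_nonneg_of_nonpos hη (hs0 z hz)
  · intro z hz
    rcases hFv z with h | ⟨h1, h2, h3⟩
    · have hne : z ≠ b := fun h => hz (h ▸ hbW)
      exact (h.trans (hvs z hne)).trans (Pm_mono d z fun i e _ => hvF _)
    · have hlt : nr d (z - x) < r := by
        by_contra hcon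
        have := hvη z (not_lt.1 hcon) h1
        nlinarith [hs1 z]
      rw [h2]
      calc η * s z ≤ η * Pm d s z := mul_le_mul_of_nonneg_left (hss z) hη
        _ = Pm d (fun y => η * s y) z := (Pm_mul d η s z).symm
        _ ≤ Pm d F z := Pm_mono d z fun i e he => hsF _ (by
          have := nr_add d (z - x) (Pi.single i e)
          rw [nr_single d i e he] at this
          rw [add_sub_right_comm]; linarith)

lemma isLex_coord (d : ℕ) (hd : 0 < d) (A : Finset (Pt d)) (x : Pt d) (hx : IsLex d A x) :
    ∀ a ∈ A, x ⟨0, hd⟩ ≤ a ⟨0, hd⟩ := by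
  intro a ha
  by_cases h : a = x
  · rw [h]
  · obtain ⟨i, h1, h2⟩ := hx.2 a ha h
    by_cases hi : i = ⟨0, hd⟩
    · rw [hi] at h2; exact h2.le
    · refine (h1 _ ?_).le
      rw [Fin.lt_def]
      have : (i : ℕ) ≠ 0 := fun h0 => hi (Fin.ext h0)
      simp only; omega

/-- far-field lower bound for the difference of barriers -/
lemma far_bound (d : ℕ) (p : ℝ) (hp0 : 0 < p) (φp φm : Pt d → ℝ) (C c m c₁ : ℝ)
    (hC : 0 < C) (hc : 0 < c) (hm0 : 0 < m) (hc₁ : c * (9 / 4 : ℝ) ^ (-p) = 2 * c₁)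
    (hp : ∀ z, φp z ≤ C * (1 + sqn d z) ^ (-p)) (hm : ∀ z, c * (1 + sqn d z) ^ (-p) ≤ φm z)
    (S : Finset (Pt d)) (n : ℕ) (hS : S.card ≤ n) (hmn : m * (n * (C * 4 ^ p)) ≤ c₁)
    (z x b : Pt d) (D : ℝ) (hz : 2 * D ≤ nr d (z - x)) (hb : nr d (x - b) ≤ D)
    (hw : ∀ w ∈ S, nr d (x - w) ≤ D) :
    c₁ * (1 + sqn d (z - x)) ^ (-p) ≤ φm (z - b) - m * ∑ w ∈ S, φp (z - w) := by
  set N := sqn d (z - x) with hN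
  have hN0 : 0 ≤ N := sqn_nonneg _ _
  have hNn : nr d (z - x) ^ 2 = N := nr_sq _ _
  have hn0 := nr_nonneg d (z - x)
  have hX : 0 < (1 + N) ^ (-p) := Real.rpow_pos_of_pos (by linarith) _
  have h1 : 2 * c₁ * (1 + N) ^ (-p) ≤ φm (z - b) := by
    refine le_trans ?_ (hm _)
    rw [← hc₁, mul_assoc, ← Real.mul_rpow (by norm_num) (by linarith)]
    refine mul_le_mul_of_nonneg_left ?_ hc.le
    refine Real.rpow_le_rpow_of_nonpos (by linarith [sqn_nonneg d (z - b)]) ?_ (by linarith)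
    have h2 := nr_tri d z x b
    have h3 := nr_sq d (z - b)
    have h4 := nr_nonneg d (z - b)
    rw [← h3, ← hNn]
    nlinarith
  have h2 : ∀ w ∈ S, φp (z - w) ≤ C * 4 ^ p * (1 + N) ^ (-p) := by
    intro w hwS
    refine (hp _).trans ?_
    rw [mul_assoc]
    refine mul_le_mul_of_nonneg_left ?_ hC.le
    have e : (4 : ℝ) ^ p = (1 / 4 : ℝ) ^ (-p) := by
      rw [Real.rpow_neg (by norm_num), ← Real.inv_rpow (by norm_num)]; norm_num
    rw [e, ← Real.mul_rpow (by norm_num) (by linarith)]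
    refine Real.rpow_le_rpow_of_nonpos (by linarith) ?_ (by linarith)
    have h2 := nr_tri d z w x
    rw [nr_sub_comm d w x] at h2
    have h3 := nr_sq d (z - w)
    have h4 := nr_nonneg d (z - w)
    have h5 := hw w hwS
    rw [← h3, ← hNn]
    nlinarith
  have h3 : ∑ w ∈ S, φp (z - w) ≤ n * (C * 4 ^ p * (1 + N) ^ (-p)) := by
    refine (Finset.sum_le_card_nsmul S _ _ h2).trans ?_
    rw [nsmul_eq_mul]
    have : (S.card : ℝ) ≤ n := by exact_mod_cast hS
    exact mul_le_mul_of_nonneg_right this (by positivity)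
  have h4 := mul_le_mul_of_nonneg_left h3 hm0.le
  have h5 := mul_le_mul_of_nonneg_right hmn hX.le
  nlinarith

lemma annulus_aux (t D : ℝ) (ht : 0 ≤ t) (hD : 1 ≤ D) (h : t ≤ 2 * D + 1) :
    1 + t ^ 2 ≤ 10 * D ^ 2 := by
  have h1 : t ^ 2 ≤ (2 * D + 1) ^ 2 := pow_le_pow_left₀ ht h 2
  nlinarith

set_option maxHeartbeats 1000000 in
theorem lex_hit_aux (d : ℕ) (hd : 5 ≤ d) :
    ∃ c : ℝ, 0 < c ∧ ∀ n : ℕ, ∃ ρ : ℝ,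
      ∀ A B B1 B2 : Finset (Pt d), Disjoint A B → (A ∪ B).card = n →
        ρ ≤ setDist d A B → B = B1 ∪ B2 → Disjoint B1 B2 → B1.card ≤ 3 →
        ρ ≤ setDist d B1 B2 →
        ∀ x : Pt d, IsLex d A x →
          c * (n : ℝ) ^ (-((d : ℝ) / ((d : ℝ) - 2)) - 1.6) *
              diam0 d (A ∪ B) ^ ((2 : ℝ) - (d : ℝ)) ≤
            firstHitIn d (↑(A ∪ B)) (↑B1) x / retProb d (↑(A ∪ B)) x := by
  classical
  have hd0 : 0 < d := by omega
  have hd5 : (5 : ℝ) ≤ d := by exact_mod_cast hd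
  obtain ⟨p, hp⟩ : ∃ p : ℝ, p = ((d : ℝ) - 2) / 2 := ⟨_, rfl⟩
  have hp1 : 3 / 2 ≤ p := by rw [hp]; linarith
  obtain ⟨φp, C, hC, hφp0, hφp1, hφps, hφpu⟩ := exists_super d (by omega) p hp
  obtain ⟨φm, c, hc, hφm1, hφms, hφml, hφmd⟩ := exists_sub d (by omega) p hp
  obtain ⟨c₁, hc₁⟩ : ∃ c₁ : ℝ, c₁ = c * (9 / 4 : ℝ) ^ (-p) / 2 := ⟨_, rfl⟩
  have hc₁0 : 0 < c₁ := by rw [hc₁]; positivity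
  have hc1 : c ≤ 1 := by
    have h1 := (hφml 0).trans (hφm1 0)
    simpa [sqn] using h1
  have hc₁1 : c₁ ≤ 1 := by
    have h1 : (9 / 4 : ℝ) ^ (-p) ≤ 1 :=
      Real.rpow_le_one_of_one_le_of_nonpos (by norm_num) (by linarith)
    have h2 : 0 < (9 / 4 : ℝ) ^ (-p) := by positivity
    rw [hc₁]; nlinarith
  obtain ⟨k0, hk0⟩ : ∃ k0 : ℕ, k0 = ⌈2 * C⌉₊ + 1 := ⟨_, rfl⟩
  have hk1 : 1 ≤ k0 := by omega
  have hkC : 2 * C ≤ k0 := by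
    rw [hk0]; push_cast
    linarith [Nat.le_ceil (2 * C)]
  have hk1' : (1 : ℝ) ≤ k0 := by exact_mod_cast hk1
  refine ⟨c₁ * 10 ^ (-p) / (2 * d * (2 * (d + 1) * k0)), by positivity, fun n => ?_⟩
  obtain ⟨m, hm⟩ : ∃ m : ℝ, m = c₁ / (C * 4 ^ p * (n + 1)) := ⟨_, rfl⟩
  have hm0 : 0 < m := by rw [hm]; positivity
  have hmn : m * (n * (C * 4 ^ p)) ≤ c₁ := by
    have h4 : (0 : ℝ) < 4 ^ p := by positivity
    rw [hm, div_mul_eq_mul_div, div_le_iff₀ (by positivity)]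
    have : (0 : ℝ) < c₁ * (C * 4 ^ p) := by positivity
    nlinarith
  obtain ⟨Rm, hRm⟩ := hφmd m hm0
  obtain ⟨h, hh⟩ : ∃ h : ℕ, h = k0 * n := ⟨_, rfl⟩
  have hhR : (h : ℝ) = k0 * n := by rw [hh]; push_cast; ring
  obtain ⟨ρ, hρ⟩ : ∃ ρ : ℝ, ρ = 1 + |Rm| + (d + 2) * h := ⟨_, rfl⟩
  have hterm : 0 ≤ ((d : ℝ) + 2) * h := by positivity
  have hρ1 : 1 ≤ ρ := by rw [hρ]; linarith [abs_nonneg Rm]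
  have hρR : Rm ≤ ρ ^ 2 := by
    have : Rm ≤ ρ := by rw [hρ]; linarith [le_abs_self Rm]
    nlinarith
  have hρh : ((d : ℝ) + 2) * h ≤ ρ := by rw [hρ]; linarith [abs_nonneg Rm]
  refine ⟨ρ, ?_⟩
  intro A B B1 B2 hAB hcard hdAB hB hB12 hB1 hdB x hx
  obtain ⟨⟨b, hb⟩, -⟩ := setDist_ne d B1 B2 (by linarith)
  have hbB : b ∈ B := by rw [hB]; exact Finset.mem_union_left _ hb
  have hxW : x ∈ A ∪ B := Finset.mem_union_left _ hx.1
  have hbW : b ∈ A ∪ B := Finset.mem_union_right _ hbB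
  have hn1 : 1 ≤ n := by
    rw [← hcard]; exact Finset.card_pos.2 ⟨x, hxW⟩
  have hn1' : (1 : ℝ) ≤ n := by exact_mod_cast hn1
  have hh1 : 1 ≤ h := by rw [hh]; exact Nat.mul_pos hk1 hn1
  have hh1' : (1 : ℝ) ≤ h := by exact_mod_cast hh1
  obtain ⟨D, hD⟩ : ∃ D : ℝ, D = diam0 d (A ∪ B) := ⟨_, rfl⟩
  have hDw : ∀ w ∈ A ∪ B, nr d (x - w) ≤ D := fun w hw => by
    rw [hD]; exact le_diam0 d _ x w hxW hw
  have hD1 : 1 ≤ D := by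
    have h1 := setDist_le d A B x b hx.1 hbB
    have h2 := hDw b hbW
    linarith
  -- the near barrier
  obtain ⟨s, hs1, hs0, hss, hsx⟩ := exists_s d ⟨0, hd0⟩ φp hφp0 hφp1 hφps A B x h hh1
    (isLex_coord d hd0 A x hx)
    (fun y hy => hρh.trans (hdAB.trans (setDist_le d A B x y hx.1 hy)))
    (by
      intro z hz
      have h1 : ∀ w ∈ A ∪ B, φp (z - w) ≤ C * (h : ℝ)⁻¹ := by
        intro w hw
        refine (hφpu _).trans (mul_le_mul_of_nonneg_left ?_ hC.le)
        have h2 := hz w hw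
        have h3 := nr_sq d (z - w)
        have h4 : (h : ℝ) ≤ 1 + sqn d (z - w) := by nlinarith
        have h5 : 1 ≤ 1 + sqn d (z - w) := by linarith
        calc (1 + sqn d (z - w)) ^ (-p) ≤ (1 + sqn d (z - w)) ^ (-1 : ℝ) :=
              Real.rpow_le_rpow_of_exponent_le h5 (by linarith)
          _ = (1 + sqn d (z - w))⁻¹ := Real.rpow_neg_one _
          _ ≤ (h : ℝ)⁻¹ := inv_anti₀ (by linarith) h4
      refine (Finset.sum_le_card_nsmul _ _ _ h1).trans ?_
      rw [nsmul_eq_mul, hcard, hhR]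
      have : (n : ℝ) * (C * ((k0 : ℝ) * n)⁻¹) = C / k0 := by field_simp
      rw [this, div_le_iff₀ (by linarith)]
      linarith)
  -- the far barrier
  set S := (A ∪ B) \ B1 with hS
  obtain ⟨v, hv⟩ : ∃ v : Pt d → ℝ, v = fun z => φm (z - b) - m * ∑ w ∈ S, φp (z - w) := ⟨_, rfl⟩
  have hsum0 : ∀ z, 0 ≤ ∑ w ∈ S, φp (z - w) := fun z => Finset.sum_nonneg fun w _ => hφp0 _
  have hvm : ∀ z, v z ≤ φm (z - b) := fun z => by
    rw [hv]; have := mul_nonneg hm0.le (hsum0 z); simp only; linarith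
  obtain ⟨η, hη⟩ : ∃ η : ℝ, η = c₁ * (10 * D ^ 2) ^ (-p) := ⟨_, rfl⟩
  have hη0 : 0 < η := by rw [hη]; positivity
  have hη1 : η ≤ 1 := by
    have h1 : (10 * D ^ 2) ^ (-p) ≤ 1 :=
      Real.rpow_le_one_of_one_le_of_nonpos (by nlinarith) (by linarith)
    have h2 : 0 < (10 * D ^ 2) ^ (-p) := by positivity
    rw [hη]; nlinarith
  have hU : η * s (x + Pi.single ⟨0, hd0⟩ (-1)) ≤
      Uu d (↑(A ∪ B)) (↑B1) (x + Pi.single ⟨0, hd0⟩ (-1)) := by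
    refine glue d hd0 (↑(A ∪ B)) (↑B1) x b (Finset.mem_coe.2 hbW) v s η (2 * D) hη0.le hη1
      (by linarith) (fun z => (hvm z).trans (hφm1 _)) ?_ ?_ ?_ ?_ hs1
      (fun w hw => hs0 w (Finset.mem_coe.1 hw)) hss _ ?_
    · intro z hz hzB
      have hzW : z ∈ A ∪ B := Finset.mem_coe.1 hz
      have hzB1 : z ∉ B1 := fun h => hzB (Finset.mem_coe.2 h)
      have hzS : z ∈ S := Finset.mem_sdiff.2 ⟨hzW, hzB1⟩
      have hfar : ρ ≤ nr d (z - b) := by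
        rcases Finset.mem_union.1 hzW with hA | hB'
        · exact hdAB.trans (setDist_le d A B z b hA hbB)
        · rw [hB] at hB'
          rcases Finset.mem_union.1 hB' with h1 | h2
          · exact absurd h1 hzB1
          · rw [nr_sub_comm]; exact hdB.trans (setDist_le d B1 B2 b z hb h2)
      have h1 : φm (z - b) ≤ m := by
        refine hRm _ (hρR.trans ?_)
        rw [← nr_sq]
        exact pow_le_pow_left₀ (by linarith) hfar 2
      have h2 : 1 ≤ ∑ w ∈ S, φp (z - w) := by
        have := Finset.single_le_sum (f := fun w => φp (z - w)) (fun w _ => hφp0 _) hzS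
        simpa [hφp1] using this
      have h3 := mul_le_mul_of_nonneg_left h2 hm0.le
      rw [hv]; simp only; linarith
    · intro z hz
      rw [hv]
      rw [Pm_sub d (fun y => φm (y - b)) (fun y => m * ∑ w ∈ S, φp (y - w)),
        Pm_mul d m (fun y => ∑ w ∈ S, φp (y - w)), Pm_sum d S (fun w y => φp (y - w)), Pm_shift]
      have h1 := hφms (z - b) (sub_ne_zero.2 hz)
      have h2 : ∑ w ∈ S, Pm d (fun y => φp (y - w)) z ≤ ∑ w ∈ S, φp (z - w) :=
        Finset.sum_le_sum fun w _ => by rw [Pm_shift]; exact hφps _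
      have h3 := mul_le_mul_of_nonneg_left h2 hm0.le
      simp only
      linarith
    · intro ε hε
      obtain ⟨R, hR⟩ := hφmd ε hε
      exact ⟨R, fun z hz => (hvm z).trans (hR _ hz)⟩
    · intro z hz1 hz2
      have h1 := far_bound d p (by linarith) φp φm C c m c₁ hC hc hm0 (by rw [hc₁]; ring) hφpu hφml
        S n (by rw [← hcard]; exact Finset.card_le_card Finset.sdiff_subset) hmn z x b D hz1
        (hDw b hbW) (fun w hw => hDw w (Finset.mem_sdiff.1 hw).1)
      rw [hv]
      refine le_trans ?_ h1
      rw [hη]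
      refine mul_le_mul_of_nonneg_left ?_ hc₁0.le
      refine Real.rpow_le_rpow_of_nonpos (by linarith [sqn_nonneg d (z - x)]) ?_ (by linarith)
      have h3 := nr_sq d (z - x)
      have h4 := nr_nonneg d (z - x)
      rw [← h3]
      exact annulus_aux _ _ h4 hD1 hz2
    · rw [add_sub_cancel_left, nr_single d _ _ (Or.inr rfl)]; linarith
  have hhit : η * (1 / (2 * ((d : ℝ) + 1) * h)) / (2 * d) ≤ firstHitIn d (↑(A ∪ B)) (↑B1) x := by
    rw [firstHitIn_eq d hd0]
    refine le_trans ?_ (Pm_single d hd0 _ (Uu_nonneg d _ _) x ⟨0, hd0⟩ (-1) (Or.inr rfl))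
    refine div_le_div_of_nonneg_right ?_ (by positivity)
    exact (mul_le_mul_of_nonneg_left hsx hη0.le).trans hU
  have hpos : 0 < firstHitIn d (↑(A ∪ B)) (↑B1) x := lt_of_lt_of_le (by positivity) hhit
  have hret1 : retProb d (↑(A ∪ B)) x ≤ 1 := by
    rw [retProb_eq, firstHitIn_eq d hd0]
    refine (Pm_mono d x (G := fun _ => 1) fun i e _ => Uu_le_one d hd0 _ _ _).trans ?_
    rw [Pm_const d hd0]
  have hret0 : 0 < retProb d (↑(A ∪ B)) x := by
    refine lt_of_lt_of_le hpos ?_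
    rw [retProb_eq, firstHitIn_eq d hd0, firstHitIn_eq d hd0]
    exact Pm_mono d x fun i e _ => Uu_mono d hd0 _ _ _
  rw [le_div_iff₀ hret0]
  have hDp : (D ^ 2) ^ (-p) = D ^ ((2 : ℝ) - d) := by
    rw [← Real.rpow_natCast, ← Real.rpow_mul (by linarith)]
    congr 1
    rw [hp]; push_cast; ring
  have hη' : η = c₁ * 10 ^ (-p) * D ^ ((2 : ℝ) - d) := by
    rw [hη, Real.mul_rpow (by norm_num) (by positivity), hDp]; ring
  have hnn : (n : ℝ) ^ (-((d : ℝ) / ((d : ℝ) - 2)) - 1.6) ≤ (n : ℝ)⁻¹ := by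
    rw [← Real.rpow_neg_one]
    refine Real.rpow_le_rpow_of_exponent_le hn1' ?_
    have : 0 ≤ (d : ℝ) / ((d : ℝ) - 2) := div_nonneg (by linarith) (by linarith)
    norm_num
    linarith
  have hD0 : 0 < D ^ ((2 : ℝ) - d) := Real.rpow_pos_of_pos (by linarith) _
  rw [← hD]
  have hK : 0 < c₁ * 10 ^ (-p) / (2 * d * (2 * (d + 1) * k0)) := by positivity
  have hnpos : 0 < (n : ℝ) ^ (-((d : ℝ) / ((d : ℝ) - 2)) - 1.6) :=
    Real.rpow_pos_of_pos (by linarith) _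
  refine (mul_le_of_le_one_right (by positivity) hret1).trans (le_trans ?_ hhit)
  calc _ ≤ c₁ * 10 ^ (-p) / (2 * d * (2 * (d + 1) * k0)) * (n : ℝ)⁻¹ * D ^ ((2 : ℝ) - d) := by
        gcongr
    _ = _ := by
        rw [hη', hhR]
        field_simp

/-- **Conditional hitting estimate for lex elements.** Let `d ≥ 5`. There are
`ρ = ρ(n,d)` and `c = c(d) > 0` such that if `x` is lex in `A`, `A ∪ B` is an `n`-element
subset of `ℤ^d` with `dist(A,B) ≥ ρ`, and `B = B¹ ∪ B²` with `|B¹| ≤ 3` and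
`dist(B¹,B²) ≥ ρ`, then
`P_x(S_{τ_{A∪B}} ∈ B¹ ∣ τ_{A∪B} < ∞) ≥ c n^{−d/(d−2) − 1.6} diam(A∪B)^{2−d}`. -/
theorem lex_hit (d : ℕ) (hd : 5 ≤ d) :
    ∃ c : ℝ, 0 < c ∧ ∀ n : ℕ, ∃ ρ : ℝ,
      ∀ A B B1 B2 : Finset (Pt d), Disjoint A B → (A ∪ B).card = n →
        ρ ≤ setDist d A B → B = B1 ∪ B2 → Disjoint B1 B2 → B1.card ≤ 3 →
        ρ ≤ setDist d B1 B2 →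
        ∀ x : Pt d, IsLex d A x →
          c * (n : ℝ) ^ (-((d : ℝ) / ((d : ℝ) - 2)) - 1.6) *
              diam0 d (A ∪ B) ^ ((2 : ℝ) - (d : ℝ)) ≤
            firstHitIn d (↑(A ∪ B)) (↑B1) x / retProb d (↑(A ∪ B)) x := by
  exact lex_hit_aux d hd

end HATFormal
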